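/- For integers a, b with a > b + 1 and b ≥ 4, the MV assignment M^a V^b on the 1×(a+b+1) strip of stamps satisfies c(M^a V^b) = ab + b² − b + 1. -/

import Mathlib

/-- A crease direction: mountain or valley. -/
inductive MV : Type
  | M : MV
  | V : MV
deriving DecidableEq

/-- The value `σ(i)` of a layer ordering at face `i`, as a natural number
(`0` if `i` is out of range). -/
def faceVal {n : ℕ} (σ : Equiv.Perm (Fin n)) (i : ℕ) : ℕ :=
  if h : i < n then (σ ⟨i, h⟩ : Fin n) else 0

/-- Condition (1): the layer ordering respects the mountain–valley assignment. -/
def MVRelations (n : ℕ) (μ : ℕ → MV) (σ : Equiv.Perm (Fin n)) : Prop :=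
  ∀ i, i + 1 < n →
    if (μ i = MV.M ∧ Even i) ∨ (μ i = MV.V ∧ Odd i)
    then faceVal σ (i + 1) < faceVal σ i
    else faceVal σ i < faceVal σ (i + 1)

/-- `x` lies strictly between `lo` and `hi` (in either order). -/
def StrictlyBetween (x a b : ℕ) : Prop := min a b < x ∧ x < max a b

/-- Condition (2): no two creases on the same side cross. -/
def NoCrossings (n : ℕ) (σ : Equiv.Perm (Fin n)) : Prop :=
  ∀ i j, i + 1 < n → j + 1 < n → i % 2 = j % 2 →
    ¬ Xor' (StrictlyBetween (faceVal σ j) (faceVal σ i) (faceVal σ (i + 1)))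
           (StrictlyBetween (faceVal σ (j + 1)) (faceVal σ i) (faceVal σ (i + 1)))

/-- A valid layer ordering for the MV assignment `μ` on the `1 × n` strip. -/
def ValidLayerOrdering (n : ℕ) (μ : ℕ → MV) (σ : Equiv.Perm (Fin n)) : Prop :=
  MVRelations n μ σ ∧ NoCrossings n σ

/-- `c(μ)`: the number of valid layer orderings for `μ` on the `1 × n` strip. -/
noncomputable def foldCount (n : ℕ) (μ : ℕ → MV) : ℕ :=
  Nat.card {σ : Equiv.Perm (Fin n) // ValidLayerOrdering n μ σ}

set_option linter.unusedVariables false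

def Bt (y a b : ℤ) : Prop := (a < y ∧ y < b) ∨ (b < y ∧ y < a)

/-- validity of a position function on the faces `-s..t`. -/
structure Val (s t : ℤ) (p : ℤ → ℤ) : Prop where
  inj : ∀ x y, -s ≤ x → x ≤ t → -s ≤ y → y ≤ t → p x = p y → x = y
  ctr : p 1 < p 0 ∧ p 0 < p (-1)
  dir : ∀ x, -s < x → x < t → x ≠ 0 → (p x < p (x-1) ↔ p x < p (x+1))
  cr : ∀ x y, -s ≤ x → x < t → -s ≤ y → y < t → x % 2 = y % 2 → x ≠ y →
    (Bt (p y) (p x) (p (x+1)) ↔ Bt (p (y+1)) (p x) (p (x+1)))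

def OE (l r : ℤ) (p q : ℤ → ℤ) : Prop :=
  ∀ x y, l ≤ x → x ≤ r → l ≤ y → y ≤ r → (p x < p y ↔ q x < q y)

def rel (l r : ℤ) (p : ℤ → ℤ) : Set (ℤ × ℤ) :=
  {q | (l ≤ q.1 ∧ q.1 ≤ r) ∧ (l ≤ q.2 ∧ q.2 ≤ r) ∧ p q.1 < p q.2}

def relSet (s t : ℤ) (C : (ℤ → ℤ) → Prop) : Set (Set (ℤ × ℤ)) :=
  rel (-s) t '' {p | Val s t p ∧ C p}

noncomputable def Cnt (s t : ℤ) (C : (ℤ → ℤ) → Prop) : ℕ := (relSet s t C).ncard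

theorem rel_eq_iff {l r : ℤ} {p q : ℤ → ℤ} : rel l r p = rel l r q ↔ OE l r p q := by
  constructor
  · intro h x y h1 h2 h3 h4
    have := Set.ext_iff.1 h (x, y)
    simp only [rel, Set.mem_ofPred_eq] at this
    tauto
  · intro h
    ext ⟨x, y⟩
    simp only [rel, Set.mem_ofPred_eq]
    constructor
    · rintro ⟨⟨a, b⟩, ⟨c, d⟩, e⟩
      exact ⟨⟨a, b⟩, ⟨c, d⟩, (h x y a b c d).1 e⟩
    · rintro ⟨⟨a, b⟩, ⟨c, d⟩, e⟩
      exact ⟨⟨a, b⟩, ⟨c, d⟩, (h x y a b c d).2 e⟩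

theorem relSet_finite (s t : ℤ) (C : (ℤ → ℤ) → Prop) : (relSet s t C).Finite := by
  have hf : ((Set.Icc (-s) t) ×ˢ (Set.Icc (-s) t)).Finite :=
    (Set.finite_Icc _ _).prod (Set.finite_Icc _ _)
  refine hf.finite_subsets.subset ?_
  rintro R ⟨p, _, rfl⟩
  rintro ⟨x, y⟩ ⟨h1, h2, _⟩
  exact ⟨h1, h2⟩

theorem Cnt_congr {s t : ℤ} {C D : (ℤ → ℤ) → Prop} (h : ∀ p, Val s t p → (C p ↔ D p)) :
    Cnt s t C = Cnt s t D := by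
  have : {p | Val s t p ∧ C p} = {p | Val s t p ∧ D p} := by
    ext p
    simp only [Set.mem_ofPred_eq]
    constructor
    · rintro ⟨a, b⟩; exact ⟨a, (h p a).1 b⟩
    · rintro ⟨a, b⟩; exact ⟨a, (h p a).2 b⟩
  unfold Cnt relSet
  rw [this]

theorem Cnt_zero {s t : ℤ} {C : (ℤ → ℤ) → Prop} (h : ∀ p, Val s t p → ¬ C p) :
    Cnt s t C = 0 := by
  have : {p | Val s t p ∧ C p} = ∅ := by
    ext p
    simp only [Set.mem_ofPred_eq, Set.mem_empty_iff_false, iff_false]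
    rintro ⟨a, b⟩; exact h p a b
  unfold Cnt relSet
  rw [this]; simp

theorem Cnt_split {s t : ℤ} (C D : (ℤ → ℤ) → Prop)
    (h : ∀ p q, Val s t p → Val s t q → OE (-s) t p q → D p → D q) :
    Cnt s t C = Cnt s t (fun p => C p ∧ D p) + Cnt s t (fun p => C p ∧ ¬ D p) := by
  unfold Cnt
  rw [← Set.ncard_union_eq _ (relSet_finite _ _ _) (relSet_finite _ _ _)]
  · congr 1
    unfold relSet
    rw [← Set.image_union]
    congr 1
    ext p
    simp only [Set.mem_ofPred_eq, Set.mem_union]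
    tauto
  · rw [Set.disjoint_left]
    rintro R ⟨p, ⟨hp, _, hd⟩, rfl⟩ ⟨q, ⟨hq, _, hd'⟩, he⟩
    exact hd' (h p q hp hq (rel_eq_iff.1 he.symm) hd)

theorem Cnt_transfer {s t s' t' : ℤ} (C C' : (ℤ → ℤ) → Prop) (hs : s ≤ s') (ht : t ≤ t')
    (h1 : ∀ p, Val s' t' p → C' p → Val s t p ∧ C p)
    (h2 : ∀ p q, Val s' t' p → C' p → Val s' t' q → C' q → OE (-s) t p q → OE (-s') t' p q)
    (h3 : ∀ p, Val s t p → C p → ∃ p', Val s' t' p' ∧ C' p' ∧ OE (-s) t p p') :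
    Cnt s' t' C' = Cnt s t C := by
  unfold Cnt
  let f : Set (ℤ × ℤ) → Set (ℤ × ℤ) := fun R => R ∩ {q | (-s ≤ q.1 ∧ q.1 ≤ t) ∧ (-s ≤ q.2 ∧ q.2 ≤ t)}
  have hf : ∀ p, f (rel (-s') t' p) = rel (-s) t p := by
    intro p
    ext ⟨x, y⟩
    simp only [f, rel, Set.mem_inter_iff, Set.mem_ofPred_eq]
    constructor
    · rintro ⟨⟨a, b, c⟩, d, e⟩; exact ⟨d, e, c⟩
    · rintro ⟨⟨a, b⟩, ⟨c, d⟩, e⟩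
      exact ⟨⟨⟨by omega, by omega⟩, ⟨by omega, by omega⟩, e⟩, ⟨a, b⟩, ⟨c, d⟩⟩
  have himg : relSet s t C = f '' (relSet s' t' C') := by
    ext R
    constructor
    · rintro ⟨p, ⟨hp, hc⟩, rfl⟩
      obtain ⟨p', hp', hc', he⟩ := h3 p hp hc
      exact ⟨_, ⟨p', ⟨hp', hc'⟩, rfl⟩, by rw [hf]; exact (rel_eq_iff.2 he).symm⟩
    · rintro ⟨_, ⟨p, ⟨hp, hc⟩, rfl⟩, rfl⟩
      rw [hf]
      exact ⟨p, h1 p hp hc, rfl⟩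
  rw [himg, Set.InjOn.ncard_image]
  rintro _ ⟨p, ⟨hp, hc⟩, rfl⟩ _ ⟨q, ⟨hq, hc'⟩, rfl⟩ he
  rw [hf, hf] at he
  exact rel_eq_iff.2 (h2 p q hp hc hq hc' (rel_eq_iff.1 he))

theorem OE.bt {l r : ℤ} {p q : ℤ → ℤ} (h : OE l r p q) {x y z : ℤ}
    (hx : l ≤ x ∧ x ≤ r) (hy : l ≤ y ∧ y ≤ r) (hz : l ≤ z ∧ z ≤ r) :
    Bt (p x) (p y) (p z) ↔ Bt (q x) (q y) (q z) := by
  unfold Bt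
  rw [h y x hy.1 hy.2 hx.1 hx.2, h x z hx.1 hx.2 hz.1 hz.2, h z x hz.1 hz.2 hx.1 hx.2,
    h x y hx.1 hx.2 hy.1 hy.2]

theorem OE.symm {l r : ℤ} {p q : ℤ → ℤ} (h : OE l r p q) : OE l r q p :=
  fun x y a b c d => (h x y a b c d).symm

/-! mirror -/
def mir (p : ℤ → ℤ) : ℤ → ℤ := fun x => - p (-x)

theorem mir_mir (p : ℤ → ℤ) : mir (mir p) = p := by
  funext x; simp [mir]

theorem Bt_neg {x y z : ℤ} : Bt (-x) (-y) (-z) ↔ Bt x y z := by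
  unfold Bt; omega

theorem Bt_comm {x y z : ℤ} : Bt x y z ↔ Bt x z y := by
  unfold Bt; omega

theorem Val.mir {s t : ℤ} {p : ℤ → ℤ} (h : Val s t p) : Val t s (mir p) := by
  refine ⟨?_, ?_, ?_, ?_⟩
  · intro x y h1 h2 h3 h4 e
    have := h.inj (-x) (-y) (by omega) (by omega) (by omega) (by omega) (by simp only [_root_.mir] at e; omega)
    omega
  · have := h.ctr
    simp only [_root_.mir]
    simp only [neg_neg, neg_zero]
    omega
  · intro x h1 h2 h3
    have a := h.dir (-x) (by omega) (by omega) (by omega)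
    have i1 := h.inj (-x) (-x-1) (by omega) (by omega) (by omega) (by omega)
    have i2 := h.inj (-x) (-x+1) (by omega) (by omega) (by omega) (by omega)
    simp only [_root_.mir]
    rw [show -(x-1) = -x+1 by ring, show -(x+1) = -x-1 by ring]
    omega
  · intro x y h1 h2 h3 h4 h5 h6
    have a := h.cr (-x-1) (-y-1) (by omega) (by omega) (by omega) (by omega) (by omega) (by omega)
    simp only [_root_.mir, Bt_neg]
    rw [show -x-1+1 = -x by ring, show -y-1+1=-y by ring] at a
    rw [show -(x+1) = -x-1 by ring, show -(y+1) = -y-1 by ring]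
    rw [Bt_comm, ← a, Bt_comm]

theorem Val.mono {s t s' t' : ℤ} {p : ℤ → ℤ} (h : Val s t p) (hs : s' ≤ s) (ht : t' ≤ t) :
    Val s' t' p :=
  ⟨fun x y a b c d => h.inj x y (by omega) (by omega) (by omega) (by omega), h.ctr,
   fun x a b => h.dir x (by omega) (by omega),
   fun x y a b c d => h.cr x y (by omega) (by omega) (by omega) (by omega)⟩

theorem OE.mir {s t : ℤ} {p q : ℤ → ℤ} (h : OE (-s) t p q) : OE (-t) s (mir p) (mir q) := by
  intro x y a b c d
  have := h (-y) (-x) (by omega) (by omega) (by omega) (by omega)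
  simp only [_root_.mir]; omega

theorem Cnt_mir {s t : ℤ} (C : (ℤ → ℤ) → Prop) :
    Cnt s t (fun p => C (mir p)) = Cnt t s C := by
  unfold Cnt
  let g : ℤ × ℤ → ℤ × ℤ := fun q => (-q.2, -q.1)
  let f : Set (ℤ × ℤ) → Set (ℤ × ℤ) := fun R => g ⁻¹' R
  have hf : ∀ s t p, f (rel (-s) t p) = rel (-t) s (mir p) := by
    intro s t p
    ext ⟨x, y⟩
    simp only [f, g, rel, Set.mem_preimage, Set.mem_ofPred_eq, mir]
    constructor
    · rintro ⟨⟨a, b⟩, ⟨c, d⟩, e⟩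
      exact ⟨⟨by omega, by omega⟩, ⟨by omega, by omega⟩, by omega⟩
    · rintro ⟨⟨a, b⟩, ⟨c, d⟩, e⟩
      exact ⟨⟨by omega, by omega⟩, ⟨by omega, by omega⟩, by omega⟩
  have hinj : Function.Injective f := by
    intro R S h
    ext ⟨x, y⟩
    have := Set.ext_iff.1 h (-y, -x)
    simpa [f, g] using this
  have himg : relSet t s C = f '' (relSet s t (fun p => C (mir p))) := by
    ext R
    constructor
    · rintro ⟨p, ⟨hp, hc⟩, rfl⟩
      refine ⟨_, ⟨mir p, ⟨hp.mir, by simpa [mir_mir] using hc⟩, rfl⟩, ?_⟩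
      rw [hf, mir_mir]
    · rintro ⟨_, ⟨p, ⟨hp, hc⟩, rfl⟩, rfl⟩
      rw [hf]
      exact ⟨mir p, ⟨hp.mir, hc⟩, rfl⟩
  rw [himg, Set.ncard_image_of_injective _ hinj]

/-! uniqueness of one-face extension -/
theorem OE.extend {l r l' r' w z : ℤ} {p q : ℤ → ℤ} (h : OE l r p q)
    (hc : ∀ x, l' ≤ x → x ≤ r' → (l ≤ x ∧ x ≤ r) ∨ x = w)
    (hz : l ≤ z ∧ z ≤ r)
    (ip : ∀ y, l ≤ y → y ≤ r → p w ≠ p y) (iq : ∀ y, l ≤ y → y ≤ r → q w ≠ q y)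
    (np : ∀ y, l ≤ y → y ≤ r → ¬ Bt (p y) (p w) (p z))
    (nq : ∀ y, l ≤ y → y ≤ r → ¬ Bt (q y) (q w) (q z))
    (hd : p w < p z ↔ q w < q z) : OE l' r' p q := by
  have key : ∀ y, l ≤ y → y ≤ r → (p w < p y ↔ q w < q y) := by
    intro y h1 h2
    have a1 := ip y h1 h2
    have a2 := iq y h1 h2
    have a3 := np y h1 h2
    have a4 := nq y h1 h2
    have a5 := ip z hz.1 hz.2
    have a6 := iq z hz.1 hz.2
    have a7 := h y z h1 h2 hz.1 hz.2
    have a8 := h z y hz.1 hz.2 h1 h2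
    unfold Bt at a3 a4
    by_cases e : y = z
    · subst e; omega
    · omega
  intro x y h1 h2 h3 h4
  rcases hc x h1 h2 with hx | hx <;> rcases hc y h3 h4 with hy | hy
  · exact h x y hx.1 hx.2 hy.1 hy.2
  · subst hy
    have := key x hx.1 hx.2
    have := ip x hx.1 hx.2
    have := iq x hx.1 hx.2
    omega
  · subst hx; exact key y hy.1 hy.2
  · subst hx; subst hy; omega

/-! insertion -/
def ins (p : ℤ → ℤ) (w z e : ℤ) : ℤ → ℤ := fun x => if x = w then 2 * p z + e else 2 * p x

theorem ins_new (p : ℤ → ℤ) (w z e : ℤ) : ins p w z e w = 2 * p z + e := by simp [ins]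
theorem ins_old (p : ℤ → ℤ) {w x : ℤ} (z e : ℤ) (h : x ≠ w) : ins p w z e x = 2 * p x := by
  simp [ins, h]

theorem Bt_cross {a b c d : ℤ} (h1 : a ≠ c) (h2 : a ≠ d) (h3 : b ≠ c) (h4 : b ≠ d) 
    (h : Bt c a b ↔ Bt d a b) : (Bt a c d ↔ Bt b c d) := by
  unfold Bt at *; omega

theorem val_ins {s t : ℤ} {p : ℤ → ℤ} (h : Val s t p) (hs : 1 ≤ s) (ht : 1 ≤ t) {z e : ℤ}
    (he : e = 1 ∨ e = -1)
    (hd : 2 * p (-s) < 2 * p z + e ↔ p (-s) < p (1-s))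
    (hc : ∀ y, 1 - s ≤ y → y < t → y % 2 = (s+1) % 2 →
      (Bt (2 * p y) (2 * p z + e) (2 * p (-s)) ↔ Bt (2 * p (y+1)) (2 * p z + e) (2 * p (-s)))) :
    Val (s+1) t (ins p (-s-1) z e) := by
  have hn := ins_new p (-s-1) z e
  have ho : ∀ x, -s ≤ x → ins p (-s-1) z e x = 2 * p x := fun x hx => ins_old p z e (by omega)
  have hdist : ∀ y, -s ≤ y → y ≤ t → 2 * p z + e ≠ 2 * p y := fun y _ _ => by omega
  refine ⟨?_, ?_, ?_, ?_⟩
  · intro x y h1 h2 h3 h4 heq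
    by_cases hx : x = -s-1 <;> by_cases hy : y = -s-1
    · omega
    · subst hx; rw [hn, ho y (by omega)] at heq; omega
    · subst hy; rw [hn, ho x (by omega)] at heq; omega
    · rw [ho x (by omega), ho y (by omega)] at heq
      exact h.inj x y (by omega) (by omega) (by omega) (by omega) (by omega)
  · rw [ho 1 (by omega), ho 0 (by omega), ho (-1) (by omega)]
    have := h.ctr
    omega
  · intro x h1 h2 h3
    by_cases hx : x = -s
    · subst hx
      rw [ho (-s) (by omega), hn, ho (-s+1) (by omega)]
      rw [show -s+1 = 1-s by ring]; omega
    · rw [ho x (by omega), ho (x-1) (by omega), ho (x+1) (by omega)]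
      have := h.dir x (by omega) (by omega) h3
      omega
  · have dbl : ∀ a b c : ℤ, Bt (2*a) (2*b) (2*c) ↔ Bt a b c := by
      intro a b c; unfold Bt; omega
    intro x y h1 h2 h3 h4 h5 h6
    by_cases hx : x = -s-1 <;> by_cases hy : y = -s-1
    · omega
    · subst hx; rw [hn, show -s-1+1 = -s by ring, ho (-s) (by omega), ho y (by omega), ho (y+1) (by omega)]
      exact hc y (by omega) h4 (by omega)
    · subst hy; rw [hn, show -s-1+1 = -s by ring, ho (-s) (by omega), ho x (by omega), ho (x+1) (by omega)]
      have i1 := h.inj (-s) x (by omega) (by omega) (by omega) (by omega)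
      have i2 := h.inj (-s) (x+1) (by omega) (by omega) (by omega) (by omega)
      apply Bt_cross (by omega) (by omega) (by omega) (by omega)
      exact hc x (by omega) h2 (by omega)
    · rw [ho x (by omega), ho (x+1) (by omega), ho y (by omega), ho (y+1) (by omega), dbl, dbl]
      exact h.cr x y (by omega) (by omega) (by omega) (by omega) h5 h6

theorem OE_ins {s t : ℤ} {p : ℤ → ℤ} {z e : ℤ} : OE (-s) t p (ins p (-s-1) z e) := by
  intro x y a b c d
  rw [ins_old p z e (by omega), ins_old p z e (by omega)]; omega


theorem Val.cr' {s t : ℤ} {p : ℤ → ℤ} (h : Val s t p) (x x' y y' : ℤ) (hx : x' = x + 1)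
    (hy : y' = y + 1) (h1 : -s ≤ x ∧ x' ≤ t) (h2 : -s ≤ y ∧ y' ≤ t) (h3 : x % 2 = y % 2)
    (h4 : x ≠ y) : (Bt (p y) (p x) (p x') ↔ Bt (p y') (p x) (p x')) := by
  subst hx; subst hy
  exact h.cr x y h1.1 (by omega) h2.1 (by omega) h3 h4

theorem Val.dir' {s t : ℤ} {p : ℤ → ℤ} (h : Val s t p) (x l r : ℤ) (hl : l = x - 1)
    (hr : r = x + 1) (h1 : -s ≤ l ∧ r ≤ t) (h0 : x ≠ 0) : (p x < p l ↔ p x < p r) := by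
  subst hl; subst hr
  exact h.dir x (by omega) (by omega) h0

theorem Val.ne {s t : ℤ} {p : ℤ → ℤ} (h : Val s t p) (x y : ℤ) (h1 : -s ≤ x ∧ x ≤ t)
    (h2 : -s ≤ y ∧ y ≤ t) (h3 : x ≠ y) : p x ≠ p y :=
  fun e => h3 (h.inj x y h1.1 h1.2 h2.1 h2.2 e)

/-- the `k`-th face of the mountain arm turns inwards. -/
def inM (k : ℤ) (p : ℤ → ℤ) : Prop := Bt (p (-k)) (p (1-k)) (p (2-k))

/-- some face lies between the last two faces of the mountain arm. -/
def NA (s t : ℤ) (p : ℤ → ℤ) : Prop := ∃ y, -s ≤ y ∧ y ≤ t ∧ Bt (p y) (p (-s)) (p (1-s))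

/-- the last two faces of the mountain arm enclose everything. -/
def XX (s t : ℤ) (p : ℤ → ℤ) : Prop :=
  ∀ y, -s ≤ y → y ≤ t → y ≠ -s → y ≠ 1-s → Bt (p y) (p (-s)) (p (1-s))

/-- galaxy -/
def GG (t : ℤ) (p : ℤ → ℤ) : Prop :=
  ∀ y, -t ≤ y → y ≤ t → y ≠ -t → y ≠ t → Bt (p y) (p (-t)) (p t)

theorem inM_iff {k : ℤ} {p : ℤ → ℤ} (x y z : ℤ) (hx : x = -k) (hy : y = 1-k) (hz : z = 2-k) :
    inM k p ↔ Bt (p x) (p y) (p z) := by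
  subst hx; subst hy; subst hz; rfl

theorem not_inM {s t k : ℤ} {p : ℤ → ℤ} (h : Val s t p) (ht : 1 ≤ t) (hk : 2 ≤ k) (hks : k ≤ s)
    (x y z : ℤ) (hx : x = -k) (hy : y = 1-k) (hz : z = 2-k) :
    ¬ inM k p ↔ Bt (p z) (p x) (p y) := by
  rw [inM_iff x y z hx hy hz]
  have a := h.dir' y x z (by omega) (by omega) (by omega) (by omega)
  have b := h.ne x y (by omega) (by omega) (by omega)
  have c := h.ne x z (by omega) (by omega) (by omega)
  have d := h.ne z y (by omega) (by omega) (by omega)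
  unfold Bt; omega

theorem sealM {s t k : ℤ} {p : ℤ → ℤ} (h : Val s t p) (ht : 1 ≤ t) (hk : 2 ≤ k) (hks : k + 1 ≤ s)
    (hi : inM k p) : inM (k+1) p := by
  rw [inM_iff (-k) (1-k) (2-k) (by omega) (by omega) (by omega)] at hi
  rw [inM_iff (-k-1) (-k) (1-k) (by omega) (by omega) (by omega)]
  have a := h.cr' (1-k) (2-k) (-k-1) (-k) (by omega) (by omega) (by omega) (by omega) (by omega) (by omega)
  have b := h.dir' (-k) (-k-1) (1-k) (by omega) (by omega) (by omega) (by omega)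
  have c := h.ne (-k) (-k-1) (by omega) (by omega) (by omega)
  unfold Bt at *; omega

theorem allout {s t : ℤ} {p : ℤ → ℤ} (h : Val s t p) (ht : 1 ≤ t) {n : ℤ} (hn : n ≤ s)
    (ho : ¬ inM n p) {k : ℤ} (hk : 2 ≤ k) (hkn : k ≤ n) : ¬ inM k p := by
  intro hi
  apply ho
  clear ho
  induction n, hkn using Int.leInduction with
  | base => exact hi
  | succ m hm ih => exact sealM h ht (by omega) hn (ih (by omega))

theorem enc {s t : ℤ} {p : ℤ → ℤ} (h : Val s t p) (ht : 1 ≤ t) {k : ℤ} (hk : 2 ≤ k)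
    (hks : k ≤ s) (ho : ¬ inM k p) :
    ∀ y, -k ≤ y → y ≤ k - 1 → y ≤ t → y ≠ -k → y ≠ 1 - k → Bt (p y) (p (-k)) (p (1-k)) := by
  induction k, hk using Int.leInduction with
  | base =>
    intro y h1 h2 h3 h4 h5
    rw [not_inM h ht (by omega) hks (-2) (-1) 0 (by omega) (by omega) (by omega)] at ho
    have a := h.cr' (-2) (-1) 0 1 (by omega) (by omega) (by omega) (by omega) (by omega) (by omega)
    rw [show (1:ℤ)-2 = -1 by norm_num]
    have : y = 0 ∨ y = 1 := by omega
    rcases this with rfl | rfl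
    · exact ho
    · exact a.1 ho
  | succ k hk ih =>
    intro y h1 h2 h3 h4 h5
    have ih' := ih (by omega) (allout h ht hks ho hk (by omega))
    rw [not_inM h ht (by omega) hks (-k-1) (-k) (1-k) (by omega) (by omega) (by omega)] at ho
    rw [show -(k+1) = -k-1 by ring, show 1-(k+1) = -k by ring]
    have big : ∀ y, -k ≤ y → y ≤ k - 1 → y ≤ t → y ≠ -k → Bt (p y) (p (-k-1)) (p (-k)) := by
      intro y g1 g2 g3 g4
      by_cases e : y = 1 - k
      · subst e; exact ho
      · have := ih' y g1 g2 g3 g4 e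
        unfold Bt at *; omega
    by_cases e : y = k
    · subst e
      have := big (y-1) (by omega) (by omega) (by omega) (by omega)
      exact (h.cr' (-y-1) (-y) (y-1) y (by omega) (by omega) (by omega) (by omega) (by omega) (by omega)).1 this
    · exact big y (by omega) (by omega) h3 (by omega)

theorem dirs {s t : ℤ} {p : ℤ → ℤ} (h : Val s t p) {k : ℤ} (hk : 1 ≤ k) (hks : k ≤ s)
    (hkt : k ≤ t) : p (-k) < p (1-k) ↔ p (k-1) < p k := by
  induction k, hk using Int.leInduction with
  | base => have := h.ctr; norm_num; omega
  | succ k hk ih =>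
    have ih := ih (by omega) (by omega)
    rw [show -(k+1) = -k-1 by ring, show 1-(k+1) = -k by ring, show k+1-1 = k by ring]
    have a := h.dir' (-k) (-k-1) (1-k) (by omega) (by omega) (by omega) (by omega)
    have b := h.dir' k (k-1) (k+1) (by omega) (by omega) (by omega) (by omega)
    have c := h.ne (-k) (-k-1) (by omega) (by omega) (by omega)
    have c := h.ne (-k) (1-k) (by omega) (by omega) (by omega)
    have c := h.ne (k) (k-1) (by omega) (by omega) (by omega)
    have c := h.ne (k) (k+1) (by omega) (by omega) (by omega)
    omega

/-- valley version of `enc`. -/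
def inV (k : ℤ) (p : ℤ → ℤ) : Prop := Bt (p k) (p (k-1)) (p (k-2))

theorem inM_mir {k : ℤ} {p : ℤ → ℤ} : inM k (mir p) ↔ inV k p := by
  unfold inM inV mir
  rw [Bt_neg, neg_neg, show -(1-k) = k-1 by ring, show -(2-k) = k-2 by ring]

theorem encV {s t : ℤ} {p : ℤ → ℤ} (h : Val s t p) (hs : 1 ≤ s) {k : ℤ} (hk : 2 ≤ k)
    (hkt : k ≤ t) (ho : ¬ inV k p) :
    ∀ y, y ≤ k → 1 - k ≤ y → -s ≤ y → y ≠ k → y ≠ k - 1 → Bt (p y) (p k) (p (k-1)) := by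
  intro y h1 h2 h3 h4 h5
  have := enc h.mir hs hk hkt (by rwa [inM_mir]) (-y) (by omega) (by omega) (by omega) (by omega) (by omega)
  unfold mir at this
  rw [Bt_neg] at this
  simpa [show -(1-k) = k-1 by ring] using this

theorem alloutV {s t : ℤ} {p : ℤ → ℤ} (h : Val s t p) (hs : 1 ≤ s) {n : ℤ} (hn : n ≤ t)
    (ho : ¬ inV n p) {k : ℤ} (hk : 2 ≤ k) (hkn : k ≤ n) : ¬ inV k p := by
  have := allout h.mir hs hn (by rwa [inM_mir]) hk hkn
  rwa [inM_mir] at this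

theorem not_inV {s t k : ℤ} {p : ℤ → ℤ} (h : Val s t p) (hs : 1 ≤ s) (hk : 2 ≤ k) (hkt : k ≤ t)
    (x y z : ℤ) (hx : x = k) (hy : y = k-1) (hz : z = k-2) :
    ¬ inV k p ↔ Bt (p z) (p x) (p y) := by
  rw [← inM_mir, not_inM h.mir hs hk hkt (-x) (-y) (-z) (by omega) (by omega) (by omega)]
  unfold mir
  rw [Bt_neg, neg_neg, neg_neg, neg_neg]

theorem sealV {s t k : ℤ} {p : ℤ → ℤ} (h : Val s t p) (hs : 1 ≤ s) (hk : 2 ≤ k) (hkt : k + 1 ≤ t)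
    (hi : inV k p) : inV (k+1) p := by
  rw [← inM_mir] at *
  exact sealM h.mir hs hk hkt hi

/-! order invariance of the predicates -/
theorem inM_inv {s t k : ℤ} {p q : ℤ → ℤ} (hk : 0 ≤ k) (hks : k ≤ s) (hkt : 2 - k ≤ t) (h1 : 1 ≤ t)
    (h : OE (-s) t p q) : inM k p ↔ inM k q := h.bt (by omega) (by omega) (by omega)

theorem NA_inv {s t : ℤ} {p q : ℤ → ℤ} (hs : 1 ≤ s) (ht : 1 ≤ t)
    (h : OE (-s) t p q) : NA s t p ↔ NA s t q := by
  constructor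
  · rintro ⟨y, a, b, c⟩
    exact ⟨y, a, b, (h.bt (by omega) (by omega) (by omega)).1 c⟩
  · rintro ⟨y, a, b, c⟩
    exact ⟨y, a, b, (h.bt (by omega) (by omega) (by omega)).2 c⟩

/-! adjacent insertion -/
theorem adjM {s t : ℤ} {p : ℤ → ℤ} (h : Val s t p) (hs : 1 ≤ s) (ht : 1 ≤ t) :
    ∃ p', Val (s+1) t p' ∧ (∀ x, -s ≤ x → p' x = 2 * p x) ∧
      ∀ y, -s ≤ y → y ≤ t → ¬ Bt (p' y) (p' (-s-1)) (p' (-s)) := by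
  have hne := h.ne (-s) (1-s) (by omega) (by omega) (by omega)
  obtain ⟨e, he, hd⟩ : ∃ e : ℤ, (e = 1 ∨ e = -1) ∧ 
      (2 * p (-s) < 2 * p (-s) + e ↔ p (-s) < p (1-s)) := by
    by_cases hlt : p (-s) < p (1-s)
    · exact ⟨1, Or.inl rfl, by omega⟩
    · exact ⟨-1, Or.inr rfl, by omega⟩
  refine ⟨ins p (-s-1) (-s) e, val_ins h hs ht he hd ?_, fun x hx => ins_old p _ _ (by omega), ?_⟩
  · intro y h1 h2 h3
    unfold Bt; omega
  · intro y h1 h2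
    rw [ins_new, ins_old p _ _ (by omega), ins_old p _ _ (by omega)]
    unfold Bt; omega

theorem OE_of_dbl {l r : ℤ} {p p' : ℤ → ℤ} (h : ∀ x, l ≤ x → x ≤ r → p' x = 2 * p x) : OE l r p p' := by
  intro x y a b c d
  rw [h x a b, h y c d]; omega

theorem adjV {s t : ℤ} {p : ℤ → ℤ} (h : Val s t p) (hs : 1 ≤ s) (ht : 1 ≤ t) :
    ∃ p', Val s (t+1) p' ∧ (∀ x, x ≤ t → p' x = 2 * p x) ∧
      ∀ y, -s ≤ y → y ≤ t → ¬ Bt (p' y) (p' (t+1)) (p' t) := by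
  obtain ⟨q, h1, h2, h3⟩ := adjM h.mir ht hs
  refine ⟨mir q, h1.mir, ?_, ?_⟩
  · intro x hx
    have := h2 (-x) (by omega)
    simp only [mir, neg_neg] at this ⊢; omega
  · intro y a b
    have := h3 (-y) (by omega) (by omega)
    simp only [mir, Bt_neg]
    rwa [show -(t+1) = -t-1 by ring]

/-- T0 -/
theorem T0 {s t : ℤ} (hs : 1 ≤ s) (ht : 1 ≤ t) :
    Cnt (s+1) t (fun _ => True) = Cnt s t (fun _ => True) + Cnt (s+1) t (NA (s+1) t) := by
  rw [Cnt_split (fun _ => True) (NA (s+1) t) (fun p q _ _ h => (NA_inv (by omega) ht h).1), add_comm]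
  congr 1
  · apply Cnt_transfer _ _ (by omega) le_rfl
    · intro p hp _
      exact ⟨hp.mono (by omega) le_rfl, trivial⟩
    · rintro p q hp ⟨-, hcp⟩ hq ⟨-, hcq⟩ h
      have np : ∀ p, ¬ NA (s+1) t p → ∀ y, -s ≤ y → y ≤ t → ¬ Bt (p y) (p (-s-1)) (p (-s)) := by
        intro p hp y h1 h2 h3
        refine hp ⟨y, by omega, h2, ?_⟩
        rwa [show -(s+1) = -s-1 by ring, show 1-(s+1) = -s by ring]
      refine h.extend (w := -s-1) (z := -s) (fun x _ _ => by omega) (by omega) ?_ ?_ (np p hcp) (np q hcq) ?_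
      · intro y h1 h2; exact hp.ne _ _ (by omega) (by omega) (by omega)
      · intro y h1 h2; exact hq.ne _ _ (by omega) (by omega) (by omega)
      · have a := hp.dir' (-s) (-s-1) (1-s) (by omega) (by omega) (by omega) (by omega)
        have b := hq.dir' (-s) (-s-1) (1-s) (by omega) (by omega) (by omega) (by omega)
        have c := h (-s) (1-s) (by omega) (by omega) (by omega) (by omega)
        have d := hp.ne (-s) (-s-1) (by omega) (by omega) (by omega)
        have e := hq.ne (-s) (-s-1) (by omega) (by omega) (by omega)
        omega
    · intro p hp _
      obtain ⟨p', h1, h2, h3⟩ := adjM hp hs ht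
      refine ⟨p', h1, ⟨trivial, ?_⟩, OE_of_dbl fun x a _ => h2 x a⟩
      rintro ⟨y, a, b, c⟩
      rw [show -(s+1) = -s-1 by ring, show 1-(s+1) = -s by ring] at c
      by_cases e : y = -s-1
      · subst e; unfold Bt at c; omega
      · exact h3 y (by omega) b c
  · apply Cnt_congr; intro p _; simp


theorem out_iff_XX {s t : ℤ} {p : ℤ → ℤ} (h : Val s t p) (ht : 1 ≤ t) (hs : 2 ≤ s)
    (hst : t + 1 ≤ s) : ¬ inM s p ↔ XX s t p := by
  constructor
  · intro ho y h1 h2 h3 h4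
    exact enc h ht hs le_rfl ho y h1 (by omega) h2 h3 h4
  · intro hx
    rw [not_inM h ht hs le_rfl (-s) (1-s) (2-s) rfl rfl rfl]
    exact hx (2-s) (by omega) (by omega) (by omega) (by omega)

theorem XX_out {s t : ℤ} {p : ℤ → ℤ} (h : Val s t p) (ht : 1 ≤ t) (hs : 2 ≤ s)
    (hx : XX s t p) : ¬ inM s p := by
  rw [not_inM h ht hs le_rfl (-s) (1-s) (2-s) rfl rfl rfl]
  exact hx (2-s) (by omega) (by omega) (by omega) (by omega)

theorem XX_NA {s t : ℤ} {p : ℤ → ℤ} (ht : 1 ≤ t) (hs : 2 ≤ s)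
    (hx : XX s t p) : NA s t p :=
  ⟨2-s, by omega, by omega, hx (2-s) (by omega) (by omega) (by omega) (by omega)⟩

/-- wrapping folds -/
def WW (s t : ℤ) (p : ℤ → ℤ) : Prop := NA s t p ∧ inM s p

theorem T1a {s t : ℤ} (ht : 1 ≤ t) (hs : 2 ≤ s) (hst : t + 1 ≤ s) :
    Cnt s t (NA s t) = Cnt s t (WW s t) + Cnt s t (XX s t) := by
  rw [Cnt_split (NA s t) (inM s) (fun p q _ _ h => (inM_inv (by omega) le_rfl (by omega) ht h).1)]
  congr 1
  apply Cnt_congr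
  intro p hp
  rw [out_iff_XX hp ht hs hst]
  exact ⟨fun h => h.2, fun h => ⟨XX_NA ht hs h, h⟩⟩

/-- the last valley face lies between the mountain faces `t`, `t-1`. -/
def DD (t : ℤ) (p : ℤ → ℤ) : Prop := Bt (p t) (p (-t)) (p (1-t))

theorem DD_XX {t : ℤ} {p : ℤ → ℤ} (h : Val t t p) (ht : 2 ≤ t) (ho : ¬ inM t p) (hd : DD t p) :
    XX t t p := by
  intro y h1 h2 h3 h4
  by_cases e : y = t
  · subst e; exact hd
  · exact enc h (by omega) ht le_rfl ho y h1 (by omega) h2 h3 h4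

theorem nDD_GG {t : ℤ} {p : ℤ → ℤ} (h : Val t t p) (ht : 2 ≤ t) (ho : ¬ inM t p) (hd : ¬ DD t p) :
    GG t p := by
  have E := enc h (by omega) ht le_rfl ho
  have a := E (t-1) (by omega) (by omega) (by omega) (by omega) (by omega)
  have b := dirs h (by omega : 1 ≤ t) le_rfl le_rfl
  have c := h.ne t (t-1) (by omega) (by omega) (by omega)
  have d := h.ne t (-t) (by omega) (by omega) (by omega)
  have d' := h.ne t (1-t) (by omega) (by omega) (by omega)
  intro y h1 h2 h3 h4
  by_cases e : y = 1 - t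
  · subst e
    unfold DD Bt at *; omega
  · have := E y h1 (by omega) h2 h3 e
    unfold DD Bt at *; omega

theorem GG_nDD {t : ℤ} {p : ℤ → ℤ} (ht : 1 ≤ t) (hg : GG t p) : ¬ DD t p := by
  have := hg (1-t) (by omega) (by omega) (by omega) (by omega)
  unfold DD Bt at *; omega

theorem GG_out {t : ℤ} {p : ℤ → ℤ} (ht : 2 ≤ t) (hg : GG t p) : ¬ inM t p := by
  have := hg (1-t) (by omega) (by omega) (by omega) (by omega)
  have := hg (2-t) (by omega) (by omega) (by omega) 
  by_cases e : 2 - t = t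
  · omega
  have := this e
  unfold inM Bt at *; omega

theorem DD_inv {s t k : ℤ} {p q : ℤ → ℤ} (hk : 1 ≤ k) (hks : k ≤ s) (hkt : k ≤ t) 
    (h : OE (-s) t p q) : DD k p ↔ DD k q := h.bt (by omega) (by omega) (by omega)

theorem GG_NA {t : ℤ} {p : ℤ → ℤ} (h : Val t t p) (ht : 2 ≤ t) (hg : GG t p) : NA t t p := by
  refine ⟨2 - t, by omega, by omega, ?_⟩
  have := GG_out ht hg
  rwa [not_inM h (by omega) ht le_rfl (-t) (1-t) (2-t) rfl rfl rfl] at this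

theorem T1b {t : ℤ} (ht : 2 ≤ t) :
    Cnt t t (NA t t) = Cnt t t (WW t t) + (Cnt t t (XX t t) + Cnt t t (GG t)) := by
  rw [Cnt_split (NA t t) (inM t) (fun p q _ _ h => (inM_inv (by omega) le_rfl (by omega) (by omega) h).1)]
  congr 1
  rw [Cnt_split (fun p => NA t t p ∧ ¬ inM t p) (DD t)
    (fun p q _ _ h => (DD_inv (by omega) le_rfl le_rfl h).1)]
  congr 1
  · apply Cnt_congr
    intro p hp
    constructor
    · rintro ⟨⟨_, a⟩, b⟩; exact DD_XX hp ht a b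
    · intro hx
      exact ⟨⟨XX_NA (by omega) ht hx, XX_out hp (by omega) ht hx⟩,
        hx t (by omega) le_rfl (by omega) (by omega)⟩
  · apply Cnt_congr
    intro p hp
    constructor
    · rintro ⟨⟨_, a⟩, b⟩; exact nDD_GG hp ht a b
    · intro hg
      exact ⟨⟨GG_NA hp ht hg, GG_out ht hg⟩, GG_nDD (by omega) hg⟩

theorem insOut {s t z : ℤ} {p : ℤ → ℤ} (h : Val s t p) (hs : 1 ≤ s) (ht : 1 ≤ t)
    (hz : 1 - s ≤ z ∧ z ≤ t)
    (hE : ∀ y, -s ≤ y → y ≤ t → y ≠ -s → y ≠ z → Bt (p y) (p (-s)) (p z)) :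
    ∃ p', Val (s+1) t p' ∧ (∀ x, -s ≤ x → p' x = 2 * p x) ∧ XX (s+1) t p' := by
  have hne := h.ne (-s) z (by omega) (by omega) (by omega)
  obtain ⟨e, he, hd⟩ : ∃ e : ℤ, (e = 1 ∨ e = -1) ∧ (e = 1 ↔ p (-s) < p z) := by
    by_cases hlt : p (-s) < p z
    · exact ⟨1, Or.inl rfl, by omega⟩
    · exact ⟨-1, Or.inr rfl, by omega⟩
  have hA : ∀ y, -s ≤ y → y ≤ t → y ≠ -s → Bt (2 * p y) (2 * p z + e) (2 * p (-s)) := by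
    intro y h1 h2 h3
    by_cases e : y = z
    · subst e; unfold Bt; omega
    · have := hE y h1 h2 h3 e
      unfold Bt at *; omega
  refine ⟨ins p (-s-1) z e, val_ins h hs ht he ?_ ?_, fun x hx => ins_old p _ _ (by omega), ?_⟩
  · have := hA (1-s) (by omega) (by omega) (by omega)
    unfold Bt at this; omega
  · intro y h1 h2 h3
    exact iff_of_true (hA y (by omega) (by omega) (by omega)) (hA _ (by omega) (by omega) (by omega))
  · intro y h1 h2 h3 h4
    rw [show -(s+1) = -s-1 by ring, show 1-(s+1) = -s by ring, ins_new, ins_old p _ _ (by omega),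
      ins_old p _ _ (by omega)]
    exact hA y (by omega) h2 (by omega)

theorem uniqOut {s t z : ℤ} {p q : ℤ → ℤ} (hp : Val (s+1) t p) (hq : Val (s+1) t q) (hs : 1 ≤ s)
    (ht : 1 ≤ t) (hxp : XX (s+1) t p) (hxq : XX (s+1) t q) (h : OE (-s) t p q)
    (hz : 1 - s ≤ z ∧ z ≤ t)
    (hE : ∀ y, -s ≤ y → y ≤ t → y ≠ -s → y ≠ z → Bt (p y) (p (-s)) (p z)) :
    OE (-(s+1)) t p q := by
  have hE' : ∀ y, -s ≤ y → y ≤ t → y ≠ -s → y ≠ z → Bt (q y) (q (-s)) (q z) := by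
    intro y h1 h2 h3 h4
    exact (h.bt (by omega) (by omega) (by omega)).1 (hE y h1 h2 h3 h4)
  have hx : ∀ p, XX (s+1) t p → ∀ y, -s ≤ y → y ≤ t → y ≠ -s → Bt (p y) (p (-s-1)) (p (-s)) := by
    intro p hp y h1 h2 h3
    have := hp y (by omega) h2 (by omega) (by omega)
    rwa [show -(s+1) = -s-1 by ring, show 1-(s+1) = -s by ring] at this
  have hN : ∀ p, XX (s+1) t p → (∀ y, -s ≤ y → y ≤ t → y ≠ -s → y ≠ z → Bt (p y) (p (-s)) (p z)) →
      ∀ y, -s ≤ y → y ≤ t → ¬ Bt (p y) (p (-s-1)) (p z) := by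
    intro p hp hE y h1 h2
    have a := hx p hp z (by omega) (by omega) (by omega)
    by_cases e1 : y = -s
    · subst e1; unfold Bt at *; omega
    · by_cases e2 : y = z
      · subst e2; unfold Bt; omega
      · have b := hE y h1 h2 e1 e2
        unfold Bt at *; omega
  refine h.extend (w := -s-1) (z := z) (fun x _ _ => by omega) (by omega) ?_ ?_ (hN p hxp hE) (hN q hxq hE') ?_
  · intro y h1 h2; exact hp.ne _ _ (by omega) (by omega) (by omega)
  · intro y h1 h2; exact hq.ne _ _ (by omega) (by omega) (by omega)
  · have a := hx p hxp z (by omega) (by omega) (by omega)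
    have b := hx q hxq z (by omega) (by omega) (by omega)
    have c := h (-s) z (by omega) (by omega) (by omega) (by omega)
    unfold Bt at *; omega

theorem T2 {s t : ℤ} (ht : 1 ≤ t) (hst : t + 1 ≤ s) :
    Cnt (s+1) t (XX (s+1) t) = Cnt s t (XX s t) := by
  have hr : ∀ p, Val (s+1) t p → XX (s+1) t p → XX s t p := by
    intro p hp hx
    rw [← out_iff_XX (hp.mono (by omega) le_rfl) ht (by omega) hst]
    exact allout hp ht le_rfl (XX_out hp ht (by omega) hx) (by omega) (by omega)
  apply Cnt_transfer _ _ (by omega) le_rfl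
  · intro p hp hx
    exact ⟨hp.mono (by omega) le_rfl, hr p hp hx⟩
  · intro p q hp hxp hq hxq h
    exact uniqOut hp hq (by omega) ht hxp hxq h (z := 1-s) (by omega) (hr p hp hxp)
  · intro p hp hx
    obtain ⟨p', a, b, c⟩ := insOut hp (by omega) ht (z := 1-s) (by omega) hx
    exact ⟨p', a, c, OE_of_dbl fun x h _ => b x h⟩

theorem restrX {t : ℤ} (ht : 1 ≤ t) {p : ℤ → ℤ} (hp : Val (t+1) t p) (hx : XX (t+1) t p) :
    (DD t p → XX t t p) ∧ (¬ DD t p → GG t p) := by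
  by_cases e : t = 1
  · subst e
    have := hp.ctr
    constructor
    · intro h; unfold DD Bt at h; norm_num at h; omega
    · intro _ y h1 h2 h3 h4
      have : y = 0 := by omega
      subst this
      unfold Bt; omega
  · have ho := allout hp ht le_rfl (XX_out hp ht (by omega) hx) (k := t) (by omega) (by omega)
    exact ⟨DD_XX (hp.mono (by omega) le_rfl) (by omega) ho, nDD_GG (hp.mono (by omega) le_rfl) (by omega) ho⟩

theorem dbl_DD {t : ℤ} {p p' : ℤ → ℤ} (ht : 1 ≤ t) (h : ∀ x, -t ≤ x → p' x = 2 * p x) : DD t p ↔ DD t p' := by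
  unfold DD
  rw [h _ (by omega), h _ (by omega), h _ (by omega)]
  unfold Bt; omega

theorem T3a {t : ℤ} (ht : 1 ≤ t) :
    Cnt (t+1) t (fun p => XX (t+1) t p ∧ DD t p) = Cnt t t (XX t t) := by
  apply Cnt_transfer _ _ (by omega) le_rfl
  · rintro p hp ⟨hx, hd⟩
    exact ⟨hp.mono (by omega) le_rfl, (restrX ht hp hx).1 hd⟩
  · rintro p q hp ⟨hxp, hd⟩ hq ⟨hxq, _⟩ h
    exact uniqOut hp hq (by omega) ht hxp hxq h (z := 1-t) (by omega) ((restrX ht hp hxp).1 hd)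
  · intro p hp hx
    obtain ⟨p', a, b, c⟩ := insOut hp (by omega) ht (z := 1-t) (by omega) hx
    exact ⟨p', a, ⟨c, (dbl_DD ht b).1 (hx t (by omega) le_rfl (by omega) (by omega))⟩,
      OE_of_dbl fun x h _ => b x h⟩

theorem T3b {t : ℤ} (ht : 1 ≤ t) :
    Cnt (t+1) t (fun p => XX (t+1) t p ∧ ¬ DD t p) = Cnt t t (GG t) := by
  apply Cnt_transfer _ _ (by omega) le_rfl
  · rintro p hp ⟨hx, hd⟩
    exact ⟨hp.mono (by omega) le_rfl, (restrX ht hp hx).2 hd⟩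
  · rintro p q hp ⟨hxp, hd⟩ hq ⟨hxq, _⟩ h
    exact uniqOut hp hq (by omega) ht hxp hxq h (z := t) (by omega) ((restrX ht hp hxp).2 hd)
  · intro p hp hx
    obtain ⟨p', a, b, c⟩ := insOut hp (by omega) ht (z := t) (by omega) hx
    exact ⟨p', a, ⟨c, fun hd => GG_nDD ht hx ((dbl_DD ht b).2 hd)⟩,
      OE_of_dbl fun x h _ => b x h⟩

theorem T3 {t : ℤ} (ht : 1 ≤ t) :
    Cnt (t+1) t (XX (t+1) t) = Cnt t t (XX t t) + Cnt t t (GG t) := by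
  rw [Cnt_split (XX (t+1) t) (DD t) (fun p q _ _ h => (DD_inv (by omega) (by omega) le_rfl h).1),
    T3a ht, T3b ht]

/-- in `XX t t` the last valley face is adjacent to the previous one. -/
theorem XV {t : ℤ} (ht : 2 ≤ t) {p : ℤ → ℤ} (h : Val t t p) (hx : XX t t p) :
    inV t p ∧ ∀ y, -t ≤ y → y ≤ t → ¬ Bt (p y) (p t) (p (t-1)) := by
  induction t, ht using Int.leInduction with
  | base =>
    have a1 := hx 1 (by omega) (by omega) (by omega) (by omega)
    have a2 := hx 2 (by omega) (by omega) (by omega) (by omega)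
    have a0 := hx 0 (by omega) (by omega) (by omega) (by omega)
    norm_num at a1 a2 a0
    have b := h.dir' 1 0 2 (by omega) (by omega) (by omega) (by omega)
    have c := h.ctr
    have d := h.ne 0 2 (by omega) (by omega) (by omega)
    have e := h.ne 1 2 (by omega) (by omega) (by omega)
    have f := h.cr' (-1) 0 1 2 (by omega) (by omega) (by omega) (by omega) (by omega) (by omega)
    have i2 : Bt (p 2) (p 1) (p 0) := by unfold Bt at *; omega
    constructor
    · unfold inV; norm_num; exact i2
    · intro y h1 h2
      norm_num
      have : y = -2 ∨ y = -1 ∨ y = 0 ∨ y = 1 ∨ y = 2 := by omega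
      rcases this with rfl | rfl | rfl | rfl | rfl <;> (unfold Bt at *; omega)
  | succ t ht ih =>
    have hx' : ∀ y, -t ≤ y → y ≤ t+1 → y ≠ -t → Bt (p y) (p (-t-1)) (p (-t)) := by
      intro y h1 h2 h3
      have := hx y (by omega) h2 (by omega) (by omega)
      rwa [show -(t+1) = -t-1 by ring, show 1-(t+1) = -t by ring] at this
    have hin : inV (t+1) p := by
      by_contra ho
      have := encV h (by omega) (by omega) le_rfl ho (-t) (by omega) (by omega) (by omega) (by omega) (by omega)
      rw [show t+1-1 = t by ring] at this
      have a := hx' t (by omega) (by omega) (by omega)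
      have b := hx' (t+1) (by omega) (by omega) (by omega)
      unfold Bt at *; omega
    refine ⟨hin, ?_⟩
    have hout : ¬ inM t p := allout h (by omega) le_rfl (XX_out h (by omega) (by omega) hx) ht (by omega)
    have vt := hx' t (by omega) (by omega) (by omega)
    have vt1 := hx' (t+1) (by omega) (by omega) (by omega)
    have hin' : Bt (p (t+1)) (p t) (p (t-1)) := by
      unfold inV at hin
      rwa [show t+1-1 = t by ring, show t+1-2 = t-1 by ring] at hin
    have hv := h.mono (show t ≤ t+1 by omega) (show t ≤ t+1 by omega)
    rw [show t+1-1 = t by ring]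
    have E := enc hv (by omega) ht le_rfl hout
    by_cases hi : inV t p
    · have hd : DD t p := by
        by_contra hd
        have g := nDD_GG hv ht hout hd
        have g1 := g (t-1) (by omega) (by omega) (by omega) (by omega)
        have g2 := g (t-2) (by omega) (by omega) (by omega) (by omega)
        unfold inV Bt at *; omega
      have := (ih hv (DD_XX hv ht hout hd)).2
      intro y h1 h2
      by_cases e : y = t+1
      · subst e; unfold Bt; omega
      · by_cases e' : y = -t-1
        · subst e'; unfold Bt at *; omega
        · have := this y (by omega) (by omega)
          unfold Bt at *; omega
    · have m1 := encV hv (by omega) ht le_rfl hi (1-t) (by omega) (by omega) (by omega) (by omega) (by omega)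
      have c := h.cr' (-t) (1-t) t (t+1) (by omega) (by omega) (by omega) (by omega) (by omega) (by omega)
      have e1 := E (t-1) (by omega) (by omega) (by omega) (by omega) (by omega)
      intro y h1 h2
      by_cases e : y = t+1
      · subst e; unfold Bt; omega
      by_cases e' : y = -t-1
      · subst e'; unfold Bt at *; omega
      by_cases e3 : y = -t
      · subst e3; unfold Bt at *; omega
      by_cases e4 : y = t
      · subst e4; unfold Bt; omega
      by_cases e5 : y = 1-t
      · subst e5; unfold Bt at *; omega
      have := E y (by omega) (by omega) (by omega) (by omega) e5
      unfold Bt at *; omega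

/-- one-face extension at the valley end, adjacent. -/
theorem uniqAdjV {s t : ℤ} {p q : ℤ → ℤ} (hp : Val s (t+1) p) (hq : Val s (t+1) q) (hs : 1 ≤ s)
    (ht : 1 ≤ t) (h : OE (-s) t p q)
    (np : ∀ y, -s ≤ y → y ≤ t → ¬ Bt (p y) (p (t+1)) (p t))
    (nq : ∀ y, -s ≤ y → y ≤ t → ¬ Bt (q y) (q (t+1)) (q t)) : OE (-s) (t+1) p q := by
  refine h.extend (w := t+1) (z := t) (fun x _ _ => by omega) (by omega) ?_ ?_ np nq ?_
  · intro y h1 h2; exact hp.ne _ _ (by omega) (by omega) (by omega)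
  · intro y h1 h2; exact hq.ne _ _ (by omega) (by omega) (by omega)
  · have a := hp.dir' t (t-1) (t+1) (by omega) (by omega) (by omega) (by omega)
    have b := hq.dir' t (t-1) (t+1) (by omega) (by omega) (by omega) (by omega)
    have c := h t (t-1) (by omega) (by omega) (by omega) (by omega)
    have d := hp.ne t (t+1) (by omega) (by omega) (by omega)
    have e := hq.ne t (t+1) (by omega) (by omega) (by omega)
    omega

theorem T4 {t : ℤ} (ht : 1 ≤ t) (K : (ℤ → ℤ) → Prop)
    (hK : ∀ p q, OE (-(t+1)) t p q → K p → K q) :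
    Cnt (t+1) (t+1) (fun p => XX (t+1) (t+1) p ∧ K p) = Cnt (t+1) t (fun p => XX (t+1) t p ∧ K p) := by
  apply Cnt_transfer _ _ le_rfl (by omega)
  · rintro p hp ⟨hx, hk⟩
    exact ⟨hp.mono le_rfl (by omega), fun y h1 h2 => hx y h1 (by omega), hk⟩
  · rintro p q hp ⟨hxp, _⟩ hq ⟨hxq, _⟩ h
    have np := (XV (by omega) hp hxp).2
    have nq := (XV (by omega) hq hxq).2
    rw [show t+1-1 = t by ring] at np nq
    exact uniqAdjV hp hq (by omega) ht h (fun y h1 h2 => np y h1 (by omega)) (fun y h1 h2 => nq y h1 (by omega))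
  · rintro p hp ⟨hx, hk⟩
    obtain ⟨p', a, b, c⟩ := adjV hp (by omega) ht
    have hoe : OE (-(t+1)) t p p' := OE_of_dbl fun x _ h => b x h
    refine ⟨p', a, ⟨?_, hK p p' hoe hk⟩, hoe⟩
    intro y h1 h2 h3 h4
    have key : ∀ y, -(t+1) ≤ y → y ≤ t → y ≠ -(t+1) → y ≠ 1-(t+1) → Bt (p' y) (p' (-(t+1))) (p' (1-(t+1))) := by
      intro y h1 h2 h3 h4
      exact (hoe.bt (by omega) (by omega) (by omega)).1 (hx y h1 h2 h3 h4)
    by_cases e : y = t+1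
    · subst e
      have k := key t (by omega) (by omega) (by omega) (by omega)
      have c1 := c (-(t+1)) (by omega) (by omega)
      have c2 := c (1-(t+1)) (by omega) (by omega)
      have n1 := a.ne (t+1) (-(t+1)) (by omega) (by omega) (by omega)
      have n2 := a.ne (t+1) (1-(t+1)) (by omega) (by omega) (by omega)
      unfold Bt at *; omega
    · exact key y h1 (by omega) h3 h4

/-- mirror image of the state `XX ∧ ¬ DD`. -/
def HH (t : ℤ) (p : ℤ → ℤ) : Prop := XX (t+1) t (mir p) ∧ ¬ DD t (mir p)

theorem HH_iff {t : ℤ} {p : ℤ → ℤ} : HH t p ↔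
    (∀ y, -t ≤ y → y ≤ t+1 → y ≠ t+1 → y ≠ t → Bt (p y) (p (t+1)) (p t)) ∧
      ¬ Bt (p (-t)) (p t) (p (t-1)) := by
  unfold HH XX DD
  simp only [mir, Bt_neg, neg_neg]
  rw [show -(1-(t+1)) = t by ring, show -(1-t) = t-1 by ring]
  constructor
  · rintro ⟨h1, h2⟩
    refine ⟨fun y a b c d => ?_, h2⟩
    have := h1 (-y) (by omega) (by omega) (by omega) (by omega)
    rwa [neg_neg] at this
  · rintro ⟨h1, h2⟩
    exact ⟨fun y a b c d => h1 (-y) (by omega) (by omega) (by omega) (by omega), h2⟩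

theorem GG_mir {t : ℤ} {p : ℤ → ℤ} (h : GG t p) : GG t (mir p) := by
  intro y h1 h2 h3 h4
  have := h (-y) (by omega) (by omega) (by omega) (by omega)
  simp only [mir, Bt_neg, neg_neg]
  rwa [Bt_comm]

theorem T5 {t : ℤ} (ht : 1 ≤ t) : Cnt (t+1) (t+1) (GG (t+1)) = Cnt t t (GG t) := by
  rw [← T3b ht, ← Cnt_mir (s := t) (t := t+1) (fun p => XX (t+1) t p ∧ ¬ DD t p)]
  change _ = Cnt t (t+1) (HH t)
  have hH : ∀ p, Val (t+1) (t+1) p → GG (t+1) p → HH t p := by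
    intro p hp hg
    have ho : ¬ inM (t+1) p := GG_out (by omega) hg
    have hov : ¬ inV (t+1) p := by
      rw [← inM_mir]; exact GG_out (by omega) (GG_mir hg)
    rw [HH_iff]
    constructor
    · intro y h1 h2 h3 h4
      have := encV hp (by omega) (by omega) le_rfl hov y h2 (by omega) (by omega) h3 (by omega)
      rwa [show t+1-1 = t by ring] at this
    · by_cases e : t = 1
      · subst e
        have := hp.ctr
        norm_num; unfold Bt; omega
      · have a := enc (hp.mono (show t ≤ t+1 by omega) le_rfl) (by omega) (by omega) le_rfl
          (allout hp (by omega) le_rfl ho (k := t) (by omega) (by omega)) (t-1) (by omega) (by omega) (by omega) (by omega) (by omega)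
        have b := encV (hp.mono le_rfl (show t ≤ t+1 by omega)) (by omega) (by omega) le_rfl
          (alloutV hp (by omega) le_rfl hov (k := t) (by omega) (by omega)) (1-t) (by omega) (by omega) (by omega) (by omega) (by omega)
        unfold Bt at *; omega
  have hz : ∀ p, GG (t+1) p → Bt (p t) (p (-t-1)) (p (t+1)) := by
    intro p hg
    have := hg t (by omega) (by omega) (by omega) (by omega)
    rwa [show -(t+1) = -t-1 by ring] at this
  have hN : ∀ p, Val (t+1) (t+1) p → GG (t+1) p → ∀ y, -t ≤ y → y ≤ t+1 → ¬ Bt (p y) (p (-t-1)) (p t) := by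
    intro p hp hg y h1 h2
    have a := hz p hg
    by_cases e : y = t
    · subst e; unfold Bt; omega
    by_cases e2 : y = t+1
    · subst e2; unfold Bt at *; omega
    have := (HH_iff.1 (hH p hp hg)).1 y h1 h2 e2 e
    unfold Bt at *; omega
  apply Cnt_transfer (s := t) (t := t+1) (HH t) (GG (t+1)) (by omega) le_rfl
  · intro p hp hg
    exact ⟨hp.mono (by omega) le_rfl, hH p hp hg⟩
  · intro p q hp hgp hq hgq h
    refine h.extend (w := -t-1) (z := t) (fun x _ _ => by omega) (by omega) ?_ ?_ (hN p hp hgp) (hN q hq hgq) ?_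
    · intro y h1 h2; exact hp.ne _ _ (by omega) (by omega) (by omega)
    · intro y h1 h2; exact hq.ne _ _ (by omega) (by omega) (by omega)
    · have a := hz p hgp
      have b := hz q hgq
      have c := h t (t+1) (by omega) (by omega) (by omega) (by omega)
      unfold Bt at *; omega
  · intro p hp hh
    obtain ⟨hh1, hh2⟩ := HH_iff.1 hh
    have hne := hp.ne t (t+1) (by omega) (by omega) (by omega)
    have hmt := hh1 (-t) (by omega) (by omega) (by omega) (by omega)
    have hall : ∀ y, 1-t ≤ y → y ≤ t-1 → Bt (p y) (p (-t)) (p t) := by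
      intro y h1 h2
      by_cases e : t = 1
      · subst e
        have : y = 0 := by omega
        subst this
        have := hp.ctr
        unfold Bt; omega
      · have hov : ¬ inV (t+1) p := by
          rw [not_inV hp (by omega) (by omega) le_rfl (t+1) t (t-1) (by omega) (by omega) (by omega)]
          exact hh1 (t-1) (by omega) (by omega) (by omega) (by omega)
        have b := encV (hp.mono le_rfl (show t ≤ t+1 by omega)) (by omega) (by omega) le_rfl
          (alloutV hp (by omega) le_rfl hov (k := t) (by omega) (by omega)) y (by omega) (by omega) (by omega) (by omega) 
        have c := hp.ne (-t) (t-1) (by omega) (by omega) (by omega)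
        have d := hh1 (t-1) (by omega) (by omega) (by omega) (by omega)
        by_cases e : y = t-1
        · subst e; unfold Bt at *; omega
        · have b := b e
          unfold Bt at *; omega
    obtain ⟨e, he, hd⟩ : ∃ e : ℤ, (e = 1 ∨ e = -1) ∧ (e = 1 ↔ p (-t) < p t) := by
      by_cases hlt : p (-t) < p t
      · exact ⟨1, Or.inl rfl, by omega⟩
      · exact ⟨-1, Or.inr rfl, by omega⟩
    have hne' := hp.ne (-t) t (by omega) (by omega) (by omega)
    have hA : ∀ y, 1-t ≤ y → y ≤ t → Bt (2 * p y) (2 * p t + e) (2 * p (-t)) := by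
      intro y h1 h2
      by_cases e : y = t
      · subst e; unfold Bt; omega
      · have := hall y h1 (by omega)
        unfold Bt at *; omega
    refine ⟨ins p (-t-1) t e, val_ins hp ht (by omega) he ?_ ?_, ?_, OE_ins⟩
    · have := hA (1-t) (by omega) (by omega)
      unfold Bt at this; omega
    · intro y h1 h2 h3
      exact iff_of_true (hA y (by omega) (by omega)) (hA _ (by omega) (by omega))
    · intro y h1 h2 h3 h4
      rw [show -(t+1) = -t-1 by ring, ins_new, ins_old p _ _ (by omega), ins_old p _ _ (by omega)]
      by_cases e : y = t
      · subst e; unfold Bt at *; omega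
      · have := hh1 y (by omega) (by omega) (by omega) (by omega)
        unfold Bt at *; omega


/-- restriction of a wrap whose previous face also turns in. -/
theorem W_restr {s t : ℤ} {p : ℤ → ℤ} (hw : WW (s+1) t p) (hi : inM s p) :
    WW s t p ∧ ∀ y, Bt (p y) (p (-s-1)) (p (-s)) → Bt (p y) (p (-s)) (p (1-s)) := by
  obtain ⟨⟨y, h1, h2, h3⟩, h4⟩ := hw
  rw [inM_iff (-s-1) (-s) (1-s) (by omega) (by omega) (by omega)] at h4
  rw [show -(s+1) = -s-1 by ring, show 1-(s+1) = -s by ring] at h3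
  have key : ∀ y, Bt (p y) (p (-s-1)) (p (-s)) → Bt (p y) (p (-s)) (p (1-s)) := by
    intro y h; unfold Bt at *; omega
  refine ⟨⟨⟨y, ?_, h2, key y h3⟩, hi⟩, key⟩
  by_contra hc
  have : y = -s-1 := by omega
  subst this
  unfold Bt at h3; omega

theorem encC {s t : ℤ} {p : ℤ → ℤ} (h : Val s t p) (ht : 1 ≤ t) {k : ℤ} (hk : 1 ≤ k)
    (hks : k + 1 ≤ s) (ho : ¬ inM (k+1) p) :
    ∀ y, -k ≤ y → y ≤ k - 1 → y ≤ t → p y = p (-k) ∨ p y = p (1-k) ∨ Bt (p y) (p (-k)) (p (1-k)) := by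
  intro y h1 h2 h3
  by_cases e1 : y = -k
  · subst e1; exact Or.inl rfl
  by_cases e2 : y = 1-k
  · subst e2; exact Or.inr (Or.inl rfl)
  have : 2 ≤ k := by omega
  exact Or.inr (Or.inr (enc h ht this (by omega) (allout h ht hks ho this (by omega)) y h1 h2 h3 e1 e2))

theorem outw {u t : ℤ} {p : ℤ → ℤ} (h : Val (u+1) t p) (ht : 1 ≤ t) (hu : 2 ≤ u)
    (ho : ¬ inM u p) (hi : inM (u+1) p) :
    ∀ y, -u ≤ y → y ≤ t → Bt (p y) (p (-u-1)) (p (-u)) → u - 1 ≤ y ∧ ¬ Bt (p y) (p (1-u)) (p (2-u)) := by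
  have ho' := ho
  rw [not_inM h ht hu (by omega) (-u) (1-u) (2-u) rfl rfl rfl] at ho
  rw [inM_iff (-u-1) (-u) (1-u) (by omega) (by omega) (by omega)] at hi
  have c := h.cr' (1-u) (2-u) (-u-1) (-u) (by omega) (by omega) (by omega) (by omega) (by omega) (by omega)
  have n := h.ne (-u-1) (2-u) (by omega) (by omega) (by omega)
  have E := encC h ht (k := u-1) (by omega) (by omega) (by rwa [show u-1+1 = u by ring])
  rw [show -(u-1) = 1-u by ring, show 1-(u-1) = 2-u by ring] at E
  intro y h1 h2 hb
  constructor
  · by_contra hc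
    by_cases e : y = -u
    · subst e; unfold Bt at hb; omega
    have := E y (by omega) (by omega) h2
    unfold Bt at *; omega
  · unfold Bt at *; omega

theorem W22 {t : ℤ} {p : ℤ → ℤ} (h : Val 2 t p) (ht : 1 ≤ t) (ht2 : t ≤ 2) (hw : WW 2 t p) : False := by
  obtain ⟨⟨y, h1, h2, h3⟩, h4⟩ := hw
  rw [inM_iff (-2) (-1) 0 (by omega) (by omega) (by omega)] at h4
  rw [show (1:ℤ)-2 = -1 by norm_num] at h3
  have c := h.ctr
  have : y = -2 ∨ y = -1 ∨ y = 0 ∨ y = 1 ∨ y = 2 := by omega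
  rcases this with rfl | rfl | rfl | rfl | rfl
  · unfold Bt at *; omega
  · unfold Bt at *; omega
  · unfold Bt at *; omega
  · unfold Bt at *; omega
  · have := h.cr' (-1) 0 1 2 (by omega) (by omega) (by omega) (by omega) (by omega) (by omega)
    unfold Bt at *; omega

def L0 (t : ℤ) : Prop := ∀ p, Val t t p → WW t t p → 3 ≤ t ∧ Bt (p (t-2)) (p (-t)) (p (1-t)) ∧
  Bt (p (t-1)) (p (-t)) (p (1-t)) ∧ Bt (p t) (p (-t)) (p (1-t)) ∧
  (∀ y, -t ≤ y → y ≤ t-3 → ¬ Bt (p y) (p (-t)) (p (1-t))) ∧ inV t p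

def L1 (t : ℤ) : Prop := ∀ p, Val (t+1) t p → WW (t+1) t p → 2 ≤ t ∧
  Bt (p (t-1)) (p (-t-1)) (p (-t)) ∧ Bt (p t) (p (-t-1)) (p (-t)) ∧
  (∀ y, -t ≤ y → y ≤ t-2 → ¬ Bt (p y) (p (-t-1)) (p (-t))) ∧ Bt (p t) (p (-t-1)) (p (t-1))

theorem L1_of_L0 {t : ℤ} (ht : 1 ≤ t) (h0 : 2 ≤ t → L0 t) : L1 t := by
  intro p hp hw
  by_cases e : t = 1
  · subst e; exact (W22 hp le_rfl (by omega) hw).elim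
  have ht2 : 2 ≤ t := by omega
  obtain ⟨⟨y0, a1, a2, a3⟩, a4⟩ := id hw
  rw [show -(t+1) = -t-1 by ring, show 1-(t+1) = -t by ring] at a3
  have hy0 : -t ≤ y0 := by
    by_contra hc
    have : y0 = -t-1 := by omega
    subst this
    unfold Bt at a3; omega
  have c := hp.cr' (-t-1) (-t) (t-1) t (by omega) (by omega) (by omega) (by omega) (by omega) (by omega)
  have main : ∀ y, -t ≤ y → y ≤ t-2 → ¬ Bt (p y) (p (-t-1)) (p (-t)) := by
    by_cases hi : inM t p
    · obtain ⟨w, k⟩ := W_restr hw hi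
      obtain ⟨l1, l2, l3, l4, l5, l6⟩ := h0 ht2 p (hp.mono (by omega) le_rfl) w
      intro y h1 h2 hb
      by_cases e : y = t-2
      · subst e
        have c2 := (hp.cr' (-t-1) (-t) (t-3) (t-2) (by omega) (by omega) (by omega) (by omega) (by omega) (by omega)).2 hb
        exact l5 (t-3) (by omega) le_rfl (k _ c2)
      · exact l5 y h1 (by omega) (k _ hb)
    · intro y h1 h2 hb
      have := (outw hp ht ht2 hi a4 y h1 (by omega) hb).1
      omega
  have both : Bt (p (t-1)) (p (-t-1)) (p (-t)) ∧ Bt (p t) (p (-t-1)) (p (-t)) := by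
    have : y0 = t-1 ∨ y0 = t := by
      by_contra hc
      exact main y0 hy0 (by omega) a3
    rcases this with rfl | rfl
    · exact ⟨a3, c.1 a3⟩
    · exact ⟨c.2 a3, a3⟩
  refine ⟨ht2, both.1, both.2, main, ?_⟩
  have d := dirs hp ht (by omega) le_rfl
  have n := hp.ne (t-1) t (by omega) (by omega) (by omega)
  rw [inM_iff (-t-1) (-t) (1-t) (by omega) (by omega) (by omega)] at a4
  obtain ⟨b1, b2⟩ := both
  unfold Bt at *; omega

theorem L0_step {t : ℤ} (ht : 3 ≤ t) (h0 : L0 (t-1)) (h1 : L1 (t-1)) : L0 t := by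
  intro p hp hw
  obtain ⟨⟨y0, a1, a2, a3⟩, a4⟩ := id hw
  have a4' := a4
  rw [inM_iff (-t) (1-t) (2-t) (by omega) (by omega) (by omega)] at a4
  have d := dirs hp (by omega) le_rfl le_rfl
  have d1 := hp.dir' (t-1) (t-2) t (by omega) (by omega) (by omega) (by omega)
  have n1 := hp.ne (t-1) (t-2) (by omega) (by omega) (by omega)
  have n2 := hp.ne (t-1) t (by omega) (by omega) (by omega)
  have c := hp.cr' (1-t) (2-t) (t-1) t (by omega) (by omega) (by omega) (by omega) (by omega) (by omega)
  have hNA : ∃ y, -t ≤ y ∧ y ≤ t-1 ∧ Bt (p y) (p (-t)) (p (1-t)) := by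
    by_contra hno
    push Not at hno
    have : y0 = t := by
      by_contra hc
      exact hno y0 a1 (by omega) a3
    subst this
    have q1 := hno (y0-1) (by omega) (by omega)
    have q2 := hno (y0-2) (by omega) (by omega)
    have v1 : Bt (p (y0-1)) (p (1-y0)) (p (2-y0)) := by
      apply c.2; unfold Bt at *; omega
    have v2 : Bt (p (y0-2)) (p (1-y0)) (p (2-y0)) := by
      by_cases hi : inM (y0-1) p
      · have w : WW (y0-1) (y0-1) p := by
          refine ⟨⟨y0-1, by omega, by omega, ?_⟩, hi⟩
          rwa [show -(y0-1) = 1-y0 by ring, show 1-(y0-1) = 2-y0 by ring]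
        have := (h0 p (hp.mono (by omega) (by omega)) w).2.2.1
        rwa [show -(y0-1) = 1-y0 by ring, show 1-(y0-1) = 2-y0 by ring, show y0-1-1 = y0-2 by ring] at this
      · have := enc hp (by omega) (by omega) (by omega) hi (y0-2) (by omega) (by omega) (by omega) (by omega) (by omega)
        rwa [show -(y0-1) = 1-y0 by ring, show 1-(y0-1) = 2-y0 by ring] at this
    have c3 := hp.cr' (y0-1) y0 (y0-3) (y0-2) (by omega) (by omega) (by omega) (by omega) (by omega) (by omega)
    have m1 := hp.ne (y0-1) (-y0) (by omega) (by omega) (by omega)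
    have m2 := hp.ne (y0-2) (-y0) (by omega) (by omega) (by omega)
    have v3 : Bt (p (y0-2)) (p (y0-1)) (p y0) := by
      unfold Bt at *; omega
    have v4 := c3.2 v3
    by_cases hi : inV (y0-1) p
    · unfold inV at hi
      rw [show y0-1-1 = y0-2 by ring, show y0-1-2 = y0-3 by ring] at hi
      unfold Bt at *; omega
    · have := encV hp (by omega) (by omega) (by omega) hi (2-y0) (by omega) (by omega) (by omega) (by omega) (by omega)
      rw [show y0-1-1 = y0-2 by ring] at this
      unfold Bt at *; omega
  have hp1 : Val t (t-1) p := hp.mono le_rfl (by omega)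
  have l := h1 p (by rwa [show t-1+1 = t by ring]) (by rw [show t-1+1 = t by ring]; exact ⟨hNA, a4'⟩)
  rw [show t-1-1 = t-2 by ring, show -(t-1)-1 = -t by ring, show -(t-1) = 1-t by ring,
    show t-1-2 = t-3 by ring] at l
  obtain ⟨l1, l2, l3, l4, l5⟩ := l
  have l4' : ∀ y, -t ≤ y → y ≤ t-3 → ¬ Bt (p y) (p (-t)) (p (1-t)) := by
    intro y h1 h2
    by_cases e : y = -t
    · subst e; unfold Bt; omega
    · exact l4 y (by omega) h2
  have hin : inV t p := by
    by_contra ho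
    have e := encV hp (by omega) (by omega) le_rfl ho (1-t) (by omega) (by omega) (by omega) (by omega) (by omega)
    unfold Bt at *; omega
  refine ⟨ht, l2, l3, ?_, l4', hin⟩
  unfold inV at hin
  unfold Bt at *; omega

theorem L0_all {t : ℤ} (ht : 2 ≤ t) : L0 t := by
  induction t, ht using Int.leInduction with
  | base => intro p hp hw; exact (W22 hp (by omega) le_rfl hw).elim
  | succ t ht ih =>
    apply L0_step (by omega)
    · rwa [show t+1-1 = t by ring]
    · rw [show t+1-1 = t by ring]; exact L1_of_L0 (by omega) fun _ => ih

theorem L1_all {t : ℤ} (ht : 1 ≤ t) : L1 t := L1_of_L0 ht fun h => L0_all h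

theorem L2_all {t : ℤ} (ht : 1 ≤ t) {p : ℤ → ℤ} (hp : Val (t+2) t p) (hw : WW (t+2) t p) :
    Bt (p t) (p (-t-2)) (p (-t-1)) ∧ ∀ y, -t-1 ≤ y → y ≤ t-1 → ¬ Bt (p y) (p (-t-2)) (p (-t-1)) := by
  obtain ⟨⟨y0, a1, a2, a3⟩, a4⟩ := id hw
  rw [show -(t+2) = -t-2 by ring, show 1-(t+2) = -t-1 by ring] at a3
  have main : ∀ y, -t-1 ≤ y → y ≤ t-1 → ¬ Bt (p y) (p (-t-2)) (p (-t-1)) := by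
    intro y h1 h2 hb
    by_cases hi : inM (t+1) p
    · obtain ⟨w, k⟩ := W_restr (s := t+1) (by rwa [show t+1+1 = t+2 by ring]) hi
      rw [show -(t+1)-1 = -t-2 by ring, show -(t+1) = -t-1 by ring, show 1-(t+1) = -t by ring] at k
      obtain ⟨l1, l2, l3, l4, l5⟩ := L1_all ht p (hp.mono (by omega) le_rfl) w
      have kb := k _ hb
      by_cases e : y = t-1
      · subst e
        have c2 := (hp.cr' (-t-2) (-t-1) (t-2) (t-1) (by omega) (by omega) (by omega) (by omega) (by omega) (by omega)).2 hb
        exact l4 (t-2) (by omega) le_rfl (k _ c2)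
      · by_cases e2 : y = -t-1
        · subst e2; unfold Bt at hb; omega
        · exact l4 y (by omega) (by omega) kb
    · have := (outw (u := t+1) (by rwa [show t+1+1 = t+2 by ring]) ht (by omega) hi (by rwa [show t+1+1 = t+2 by ring]) y
        (by omega) (by omega) (by rwa [show -(t+1)-1 = -t-2 by ring, show -(t+1) = -t-1 by ring])).1
      omega
  refine ⟨?_, main⟩
  have : y0 = t := by
    by_contra hc
    by_cases e : y0 = -t-2
    · subst e; unfold Bt at a3; omega
    exact main y0 (by omega) (by omega) a3
  rwa [this] at a3

theorem W3 {s t : ℤ} (ht : 1 ≤ t) (hs : t + 3 ≤ s) : ∀ p, Val s t p → ¬ WW s t p := by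
  induction s, hs using Int.leInduction with
  | base =>
    intro p hp hw
    obtain ⟨⟨y0, a1, a2, a3⟩, a4⟩ := id hw
    rw [show -(t+3) = -t-3 by ring, show 1-(t+3) = -t-2 by ring] at a3
    have hy : -t-2 ≤ y0 := by
      by_contra hc
      have : y0 = -t-3 := by omega
      subst this; unfold Bt at a3; omega
    by_cases hi : inM (t+2) p
    · obtain ⟨w, k⟩ := W_restr (s := t+2) (by rwa [show t+2+1 = t+3 by ring]) hi
      rw [show -(t+2)-1 = -t-3 by ring, show -(t+2) = -t-2 by ring, show 1-(t+2) = -t-1 by ring] at k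
      obtain ⟨l1, l2⟩ := L2_all ht (hp.mono (by omega) le_rfl) w
      by_cases e : y0 = t
      · subst e
        have c2 := (hp.cr' (-y0-3) (-y0-2) (y0-1) y0 (by omega) (by omega) (by omega) (by omega) (by omega) (by omega)).2 a3
        exact l2 (y0-1) (by omega) le_rfl (k _ c2)
      · by_cases e2 : y0 = -t-2
        · subst e2; unfold Bt at a3; omega
        · exact l2 y0 (by omega) (by omega) (k _ a3)
    · have := (outw (u := t+2) (by rwa [show t+2+1 = t+3 by ring]) ht (by omega) hi (by rwa [show t+2+1 = t+3 by ring]) y0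
        (by omega) (by omega) (by rwa [show -(t+2)-1 = -t-3 by ring, show -(t+2) = -t-2 by ring])).1
      omega
  | succ s hs ih =>
    intro p hp hw
    by_cases hi : inM s p
    · exact ih p (hp.mono (by omega) le_rfl) (W_restr hw hi).1
    · obtain ⟨⟨y0, a1, a2, a3⟩, a4⟩ := id hw
      rw [show -(s+1) = -s-1 by ring, show 1-(s+1) = -s by ring] at a3
      have hy : -s ≤ y0 := by
        by_contra hc
        have : y0 = -s-1 := by omega
        subst this; unfold Bt at a3; omega
      have := (outw hp ht (by omega) hi a4 y0 hy a2 a3).1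
      omega

theorem T9 {s t : ℤ} (ht : 1 ≤ t) (hs : t + 3 ≤ s) : Cnt s t (WW s t) = 0 := Cnt_zero (W3 ht hs)

/-- insertion just beyond the last valley face. -/
theorem insB {s t : ℤ} {p : ℤ → ℤ} (h : Val s t p) (hs : 1 ≤ s) (ht : 1 ≤ t)
    (hb : Bt (p t) (p (-s)) (p (1-s)))
    (hc : ∀ y, 1 - s ≤ y → y < t → y % 2 = (s+1) % 2 →
      (Bt (p y) (p (-s)) (p t) ↔ (y + 1 = t ∨ Bt (p (y+1)) (p (-s)) (p t)))) :
    ∃ p', Val (s+1) t p' ∧ (∀ x, -s ≤ x → p' x = 2 * p x) ∧ WW (s+1) t p' := by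
  obtain ⟨e, he, hd⟩ : ∃ e : ℤ, (e = 1 ∨ e = -1) ∧ (e = 1 ↔ p (-s) < p t) := by
    by_cases hlt : p (-s) < p t
    · exact ⟨1, Or.inl rfl, by omega⟩
    · exact ⟨-1, Or.inr rfl, by omega⟩
  have hne := h.ne (-s) t (by omega) (by omega) (by omega)
  have hQ : ∀ y, y ≤ t → -s ≤ y → (Bt (2 * p y) (2 * p t + e) (2 * p (-s)) ↔ (y = t ∨ Bt (p y) (p (-s)) (p t))) := by
    intro y h1 h2
    by_cases e : y = t
    · subst e; unfold Bt; omega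
    · have := h.ne y t (by omega) (by omega) e
      unfold Bt; omega
  refine ⟨ins p (-s-1) t e, val_ins h hs ht he ?_ ?_, fun x hx => ins_old p _ _ (by omega), ?_, ?_⟩
  · unfold Bt at hb; omega
  · intro y h1 h2 h3
    rw [hQ y (by omega) (by omega), hQ (y+1) (by omega) (by omega), ← hc y h1 h2 h3]
    exact ⟨fun h => h.resolve_left (by omega), Or.inr⟩
  · refine ⟨t, by omega, le_rfl, ?_⟩
    rw [show -(s+1) = -s-1 by ring, show 1-(s+1) = -s by ring, ins_new, ins_old p _ _ (by omega),
      ins_old p _ _ (by omega), hQ t le_rfl (by omega)]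
    exact Or.inl rfl
  · rw [inM_iff (-s-1) (-s) (1-s) (by omega) (by omega) (by omega), ins_new, ins_old p _ _ (by omega),
      ins_old p _ _ (by omega)]
    unfold Bt at *; omega

theorem uniqB {s t : ℤ} {p q : ℤ → ℤ} (hp : Val (s+1) t p) (hq : Val (s+1) t q) (hs : 1 ≤ s)
    (ht : 1 ≤ t) (h : OE (-s) t p q) (bp : Bt (p t) (p (-s-1)) (p (-s))) (bq : Bt (q t) (q (-s-1)) (q (-s)))
    (np : ∀ y, -s ≤ y → y ≤ t → ¬ Bt (p y) (p (-s-1)) (p t))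
    (nq : ∀ y, -s ≤ y → y ≤ t → ¬ Bt (q y) (q (-s-1)) (q t)) : OE (-(s+1)) t p q := by
  refine h.extend (w := -s-1) (z := t) (fun x _ _ => by omega) (by omega) ?_ ?_ np nq ?_
  · intro y h1 h2; exact hp.ne _ _ (by omega) (by omega) (by omega)
  · intro y h1 h2; exact hq.ne _ _ (by omega) (by omega) (by omega)
  · have c := h t (-s) (by omega) (by omega) (by omega) (by omega)
    unfold Bt at *; omega

theorem T6 {t : ℤ} (ht : 1 ≤ t) : Cnt (t+1) (t+1) (WW (t+1) (t+1)) = Cnt (t+1) t (WW (t+1) t) := by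
  have hN : ∀ p, Val (t+1) (t+1) p → WW (t+1) (t+1) p → ∀ y, -(t+1) ≤ y → y ≤ t → ¬ Bt (p y) (p (t+1)) (p t) := by
    intro p hp hw y h1 h2 hb
    obtain ⟨l1, l2, l3, l4, l5, l6⟩ := L0_all (by omega) p hp hw
    unfold inV at l6
    rw [show t+1-2 = t-1 by ring, show t+1-1 = t by ring] at *
    by_cases e : y = t
    · subst e; unfold Bt at hb; omega
    by_cases e : y = t-1
    · subst e; unfold Bt at *; omega
    apply l5 y h1 (by omega)
    unfold Bt at *; omega
  apply Cnt_transfer _ _ le_rfl (by omega)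
  · rintro p hp hw
    obtain ⟨l1, l2, l3, l4, l5, l6⟩ := L0_all (by omega) p hp hw
    rw [show t+1-1 = t by ring] at l3
    exact ⟨hp.mono le_rfl (by omega), ⟨t, by omega, le_rfl, l3⟩, hw.2⟩
  · rintro p q hp hxp hq hxq h
    exact uniqAdjV hp hq (by omega) ht h (hN p hp hxp) (hN q hq hxq)
  · rintro p hp ⟨⟨y, h1, h2, h3⟩, hi⟩
    obtain ⟨p', a, b, c⟩ := adjV hp (by omega) ht
    have hoe : OE (-(t+1)) t p p' := OE_of_dbl fun x _ h => b x h
    exact ⟨p', a, ⟨⟨y, h1, by omega, (hoe.bt (by omega) (by omega) (by omega)).1 h3⟩,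
      (inM_inv (by omega) le_rfl (by omega) (by omega) hoe).1 hi⟩, hoe⟩

theorem T7 {t : ℤ} (ht : 2 ≤ t) : Cnt (t+1) t (WW (t+1) t) =
    Cnt t t (WW t t) + Cnt t t (fun p => XX t t p ∧ ¬ DD (t-1) p) := by
  have hN : ∀ p, Val (t+1) t p → WW (t+1) t p → Bt (p t) (p (-t-1)) (p (-t)) ∧ 
      ∀ y, -t ≤ y → y ≤ t → ¬ Bt (p y) (p (-t-1)) (p t) := by
    intro p hp hw
    obtain ⟨l1, l2, l3, l4, l5⟩ := L1_all (by omega) p hp hw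
    refine ⟨l3, ?_⟩
    intro y h1 h2 hb
    by_cases e : y = t
    · subst e; unfold Bt at hb; omega
    by_cases e : y = t-1
    · subst e; unfold Bt at *; omega
    apply l4 y h1 (by omega)
    unfold Bt at *; omega
  have hins : ∀ p, Val t t p → Bt (p (t-1)) (p (-t)) (p (1-t)) → Bt (p t) (p (-t)) (p (1-t)) →
      (∀ y, 1-t ≤ y → y ≤ t-2 → ¬ Bt (p y) (p (-t)) (p t)) →
      ∃ p', Val (t+1) t p' ∧ (∀ x, -t ≤ x → p' x = 2 * p x) ∧ WW (t+1) t p' := by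
    intro p hp b1 b2 hno
    apply insB hp (by omega) (by omega) b2
    intro y h1 h2 h3
    by_cases e : y = t-1
    · subst e
      have d := dirs hp (by omega) le_rfl le_rfl
      have n := hp.ne (t-1) t (by omega) (by omega) (by omega)
      refine iff_of_true ?_ (Or.inl (by omega))
      unfold Bt at *; omega
    · have hy : y ≤ t-3 := by omega
      refine iff_of_false (hno y h1 (by omega)) ?_
      rintro (h | h)
      · omega
      · exact hno (y+1) (by omega) (by omega) h
  rw [Cnt_split (WW (t+1) t) (inM t) (fun p q _ _ h => (inM_inv (by omega) (by omega) (by omega) (by omega) h).1)]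
  congr 1
  · apply Cnt_transfer _ _ (by omega) le_rfl
    · rintro p hp ⟨hw, hi⟩
      exact ⟨hp.mono (by omega) le_rfl, (W_restr hw hi).1⟩
    · rintro p q hp ⟨hwp, _⟩ hq ⟨hwq, _⟩ h
      exact uniqB hp hq (by omega) (by omega) h (hN p hp hwp).1 (hN q hq hwq).1 (hN p hp hwp).2 (hN q hq hwq).2
    · rintro p hp hw
      obtain ⟨l1, l2, l3, l4, l5, l6⟩ := L0_all (by omega) p hp hw
      obtain ⟨p', a, b, c⟩ := hins p hp l3 l4 (by
        intro y h1 h2 hb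
        by_cases e : y = t-2
        · subst e
          have d := dirs hp (by omega) le_rfl le_rfl
          unfold inV at l6
          unfold Bt at *; omega
        · apply l5 y (by omega) (by omega)
          unfold Bt at *; omega)
      have hoe : OE (-t) t p p' := OE_of_dbl fun x h _ => b x h
      exact ⟨p', a, ⟨c, (inM_inv (by omega) le_rfl (by omega) (by omega) hoe).1 hw.2⟩, hoe⟩
  · apply Cnt_transfer _ _ (by omega) le_rfl
    · rintro p hp ⟨hw, hi⟩
      have hv := hp.mono (show t ≤ t+1 by omega) (le_refl t)
      obtain ⟨l1, l2, l3, l4, l5⟩ := L1_all (by omega) p hp hw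
      have hw2 := hw.2
      have o := (outw hp (by omega) ht hi hw.2 (t-1) (by omega) (by omega) l2).2
      rw [inM_iff (-t-1) (-t) (1-t) (by omega) (by omega) (by omega)] at hw2
      refine ⟨hv, DD_XX hv ht hi ?_, ?_⟩
      · unfold DD; unfold Bt at *; omega
      · unfold DD; rwa [show -(t-1) = 1-t by ring, show 1-(t-1) = 2-t by ring]
    · rintro p q hp ⟨hwp, _⟩ hq ⟨hwq, _⟩ h
      exact uniqB hp hq (by omega) (by omega) h (hN p hp hwp).1 (hN q hq hwq).1 (hN p hp hwp).2 (hN q hq hwq).2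
    · rintro p hp ⟨hx, hd⟩
      have ho := XX_out hp (by omega) ht hx
      have x1 := hx (t-1) (by omega) (by omega) (by omega) (by omega)
      have x2 := hx t (by omega) (by omega) (by omega) (by omega)
      obtain ⟨v1, v2⟩ := XV ht hp hx
      obtain ⟨p', a, b, c⟩ := hins p hp x1 x2 (by
        intro y h1 h2 hb
        have E := encC hp (by omega) (k := t-1) (by omega) (by omega) (by rwa [show t-1+1 = t by ring]) y (by omega) (by omega) (by omega)
        have v2 := v2 y (by omega) (by omega)
        have n := hp.ne y (t-1) (by omega) (by omega) (by omega)
        have n' := hp.ne (2-t) (t-1) 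
        have o := ho
        rw [not_inM hp (by omega) ht le_rfl (-t) (1-t) (2-t) rfl rfl rfl] at o
        unfold DD at hd
        rw [show -(t-1) = 1-t by ring, show 1-(t-1) = 2-t by ring] at *
        have v3 := fun h => hd (h : _)
        by_cases e : t = 2
        · subst e
          have := hp.ctr
          norm_num at *
          have : y = -1 ∨ y = 0 := by omega
          have := hp.cr' (-1) 0 1 2 (by omega) (by omega) (by omega) (by omega) (by omega) (by omega)
          rcases ‹y = -1 ∨ y = 0› with rfl | rfl <;> (unfold Bt at *; omega)
        have n' := n' (by omega) (by omega) (by omega)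
        unfold Bt at *; omega)
      have hoe : OE (-t) t p p' := OE_of_dbl fun x h _ => b x h
      refine ⟨p', a, ⟨c, ?_⟩, hoe⟩
      rwa [← inM_inv (by omega) le_rfl (by omega) (by omega) hoe]

theorem T8 {t : ℤ} (ht : 1 ≤ t) : Cnt (t+2) t (WW (t+2) t) =
    Cnt (t+1) t (WW (t+1) t) + Cnt (t+1) t (fun p => XX (t+1) t p ∧ ¬ DD t p) := by
  have hN : ∀ p, Val (t+1+1) t p → WW (t+1+1) t p → Bt (p t) (p (-(t+1)-1)) (p (-(t+1))) ∧ 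
      ∀ y, -(t+1) ≤ y → y ≤ t → ¬ Bt (p y) (p (-(t+1)-1)) (p t) := by
    intro p hp hw
    rw [show t+1+1 = t+2 by ring] at hp hw
    rw [show -(t+1)-1 = -t-2 by ring, show -(t+1) = -t-1 by ring]
    obtain ⟨l3, l4⟩ := L2_all (by omega) hp hw
    refine ⟨l3, ?_⟩
    intro y h1 h2 hb
    by_cases e : y = t
    · subst e; unfold Bt at hb; omega
    apply l4 y h1 (by omega)
    unfold Bt at *; omega
  have hins : ∀ p, Val (t+1) t p → Bt (p t) (p (-t-1)) (p (-t)) →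
      (∀ y, -t ≤ y → y ≤ t-1 → ¬ Bt (p y) (p (-t-1)) (p t)) →
      ∃ p', Val (t+1+1) t p' ∧ (∀ x, -(t+1) ≤ x → p' x = 2 * p x) ∧ WW (t+1+1) t p' := by
    intro p hp b2 hno
    apply insB hp (by omega) (by omega) (by rwa [show -(t+1) = -t-1 by ring, show 1-(t+1) = -t by ring])
    rw [show -(t+1) = -t-1 by ring]
    intro y h1 h2 h3
    refine iff_of_false (hno y (by omega) (by omega)) ?_
    rintro (h | h)
    · omega
    · exact hno (y+1) (by omega) (by omega) h
  rw [show t+2 = t+1+1 by ring]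
  rw [Cnt_split (WW (t+1+1) t) (inM (t+1)) (fun p q _ _ h => (inM_inv (by omega) (by omega) (by omega) (by omega) h).1)]
  congr 1
  · apply Cnt_transfer _ _ (by omega) le_rfl
    · rintro p hp ⟨hw, hi⟩
      exact ⟨hp.mono (by omega) le_rfl, (W_restr hw hi).1⟩
    · rintro p q hp ⟨hwp, _⟩ hq ⟨hwq, _⟩ h
      exact uniqB hp hq (by omega) (by omega) h (hN p hp hwp).1 (hN q hq hwq).1 (hN p hp hwp).2 (hN q hq hwq).2
    · rintro p hp hw
      obtain ⟨l1, l2, l3, l4, l5⟩ := L1_all (by omega) p hp hw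
      obtain ⟨p', a, b, c⟩ := hins p hp l3 (by
        intro y h1 h2 hb
        by_cases e : y = t-1
        · subst e
          unfold Bt at *; omega
        · apply l4 y (by omega) (by omega)
          unfold Bt at *; omega)
      have hoe : OE (-(t+1)) t p p' := OE_of_dbl fun x h _ => b x h
      exact ⟨p', a, ⟨c, (inM_inv (by omega) le_rfl (by omega) (by omega) hoe).1 hw.2⟩, hoe⟩
  · apply Cnt_transfer _ _ (by omega) le_rfl
    · rintro p hp ⟨hw, hi⟩
      have hv := hp.mono (show t+1 ≤ t+1+1 by omega) (le_refl t)
      have l := (hN p hp hw).1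
      have o := (outw hp (by omega) (by omega) hi hw.2 t (by omega) (by omega) l).2
      refine ⟨hv, (out_iff_XX hv ht (by omega) le_rfl).1 hi, ?_⟩
      unfold DD; rwa [show 1-(t+1) = -t by ring, show 2-(t+1) = 1-t by ring] at o
    · rintro p q hp ⟨hwp, _⟩ hq ⟨hwq, _⟩ h
      exact uniqB hp hq (by omega) (by omega) h (hN p hp hwp).1 (hN q hq hwq).1 (hN p hp hwp).2 (hN q hq hwq).2
    · rintro p hp ⟨hx, hd⟩
      have ho := XX_out hp (by omega) (by omega) hx
      have x2 := hx t (by omega) (by omega) (by omega) (by omega)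
      rw [show -(t+1) = -t-1 by ring, show 1-(t+1) = -t by ring] at x2
      obtain ⟨p', a, b, c⟩ := hins p hp x2 (by
        intro y h1 h2 hb
        have E := encC hp (by omega) (k := t) (by omega) (by omega) ho y (by omega) (by omega) (by omega)
        have n := hp.ne t (1-t) 
        have o := ho
        rw [not_inM hp (by omega) (by omega) le_rfl (-t-1) (-t) (1-t) (by omega) (by omega) (by omega)] at o
        unfold DD at hd
        have n := n (by omega) (by omega) (by omega)
        unfold Bt at *; omega)
      have hoe : OE (-(t+1)) t p p' := OE_of_dbl fun x h _ => b x h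
      refine ⟨p', a, ⟨c, ?_⟩, hoe⟩
      rwa [← inM_inv (by omega) le_rfl (by omega) (by omega) hoe]


theorem Val_base : Val 1 1 (fun x => -x) := by
  refine ⟨?_, ?_, ?_, ?_⟩
  · intro x y _ _ _ _ h; simpa using h
  · norm_num
  · intro x h1 h2 h3; omega
  · intro x y h1 h2 h3 h4 h5 h6; omega

theorem Cnt_base (C : (ℤ → ℤ) → Prop) (hC : ∀ p, Val 1 1 p → C p) : Cnt 1 1 C = 1 := by
  unfold Cnt
  rw [Set.ncard_eq_one]
  refine ⟨rel (-1) 1 (fun x => -x), ?_⟩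
  ext R
  simp only [Set.mem_singleton_iff]
  constructor
  · rintro ⟨p, ⟨hp, _⟩, rfl⟩
    rw [rel_eq_iff]
    have := hp.ctr
    intro x y h1 h2 h3 h4
    have hx : x = -1 ∨ x = 0 ∨ x = 1 := by omega
    have hy : y = -1 ∨ y = 0 ∨ y = 1 := by omega
    rcases hx with rfl | rfl | rfl <;> rcases hy with rfl | rfl | rfl <;> norm_num <;> omega
  · rintro rfl
    exact ⟨_, ⟨Val_base, hC _ Val_base⟩, rfl⟩

theorem G_val {t : ℤ} (ht : 1 ≤ t) : Cnt t t (GG t) = 1 := by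
  induction t, ht using Int.leInduction with
  | base =>
    apply Cnt_base
    intro p hp y h1 h2 h3 h4
    have : y = 0 := by omega
    subst this
    have := hp.ctr
    unfold Bt; omega
  | succ t ht ih => rw [T5 ht, ih]

theorem X_val {t : ℤ} (ht : 1 ≤ t) : (Cnt t t (XX t t) : ℤ) = t - 1 := by
  induction t, ht using Int.leInduction with
  | base =>
    rw [Cnt_zero]
    · norm_num
    · intro p hp hx
      have := hx 1 (by omega) le_rfl (by omega) (by omega)
      have := hp.ctr
      norm_num at *
      unfold Bt at *; omega
  | succ t ht ih =>
    have a := T4 ht (fun _ => True) (fun _ _ _ _ => trivial)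
    simp only [and_true] at a
    have b := T3 ht
    have c := G_val ht
    change Cnt (t+1) (t+1) (XX (t+1) (t+1)) = Cnt (t+1) t (XX (t+1) t) at a
    omega

theorem X_val' {s t : ℤ} (ht : 1 ≤ t) (hs : t + 1 ≤ s) : (Cnt s t (XX s t) : ℤ) = t := by
  induction s, hs using Int.leInduction with
  | base =>
    have b := T3 ht
    have c := G_val ht
    have d := X_val ht
    omega
  | succ s hs ih => rw [T2 ht hs, ih]

theorem W1_val {t : ℤ} (ht : 1 ≤ t) : (Cnt (t+1) t (WW (t+1) t) : ℤ) = t - 1 := by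
  induction t, ht using Int.leInduction with
  | base =>
    rw [Cnt_zero]
    · norm_num
    · intro p hp hx
      exact W22 hp le_rfl (by omega) hx
  | succ t ht ih =>
    have a := T7 (show 2 ≤ t+1 by omega)
    have b := T6 ht
    have c := T4 ht (fun p => ¬ DD t p) (fun p q h hk hd => hk ((DD_inv ht (by omega) le_rfl h).2 hd))
    have d := T3b ht
    have e := G_val ht
    rw [show t+1-1 = t by ring] at a
    omega

theorem W2_val {t : ℤ} (ht : 1 ≤ t) : (Cnt (t+2) t (WW (t+2) t) : ℤ) = t := by
  have a := T8 ht
  have d := T3b ht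
  have e := G_val ht
  have f := W1_val ht
  omega

theorem NA1 {t : ℤ} (ht : 1 ≤ t) : (Cnt (t+1) t (NA (t+1) t) : ℤ) = 2*t-1 := by
  have a := T1a ht (show 2 ≤ t+1 by omega) le_rfl
  have b := W1_val ht
  have c := X_val' ht le_rfl
  omega

theorem NA0 {t : ℤ} (ht : 1 ≤ t) : (Cnt (t+1) (t+1) (NA (t+1) (t+1)) : ℤ) = 2*t := by
  have a := T1b (show 2 ≤ t+1 by omega)
  have b := W1_val ht
  have b' := T6 ht
  have c := X_val (show 1 ≤ t+1 by omega)
  have d := G_val (show 1 ≤ t+1 by omega)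
  omega

theorem NA2 {t : ℤ} (ht : 1 ≤ t) : (Cnt (t+2) t (NA (t+2) t) : ℤ) = 2*t := by
  have a := T1a ht (show 2 ≤ t+2 by omega) (by omega)
  have b := W2_val ht
  have c := X_val' ht (show t+1 ≤ t+2 by omega)
  omega

theorem NA3 {s t : ℤ} (ht : 1 ≤ t) (hs : t+3 ≤ s) : (Cnt s t (NA s t) : ℤ) = t := by
  have a := T1a ht (show 2 ≤ s by omega) (by omega)
  have b := T9 ht hs
  have c := X_val' ht (show t+1 ≤ s by omega)
  omega

theorem F1_val {t : ℤ} (ht : 1 ≤ t) : (Cnt t t (fun _ => True) : ℤ) = 2*t^2 - 3*t + 2 := by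
  induction t, ht using Int.leInduction with
  | base => rw [Cnt_base _ (fun _ _ => trivial)]; norm_num
  | succ t ht ih =>
    have a := T0 (s := t) (t := t+1) ht (by omega)
    have b := T0 (s := t) (t := t) ht ht
    have c := Cnt_mir (s := t) (t := t+1) (fun _ => True)
    have d := NA0 ht
    have e := NA1 ht
    have : (Cnt (t+1) (t+1) (fun _ => True) : ℤ) = Cnt t t (fun _ => True) + 4*t - 1 := by omega
    rw [this, ih]; ring

theorem F_val {s t : ℤ} (ht : 1 ≤ t) (hs : t + 2 ≤ s) :
    (Cnt s t (fun _ => True) : ℤ) = s*t + t^2 - t + 1 := by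
  induction s, hs using Int.leInduction with
  | base =>
    have a := T0 (s := t) (t := t) ht ht
    have b := T0 (s := t+1) (t := t) (by omega) ht
    have c := F1_val ht
    have d := NA1 ht
    have e := NA2 ht
    rw [show t+1+1 = t+2 by ring] at b
    have : (Cnt (t+2) t (fun _ => True) : ℤ) = Cnt t t (fun _ => True) + 4*t - 1 := by omega
    rw [this, c]; ring
  | succ s hs ih =>
    have a := T0 (s := s) (t := t) (by omega) ht
    have b := NA3 ht (show t+3 ≤ s+1 by omega)
    rw [a]; push_cast; rw [ih, b]; ring

theorem dirM {s t : ℤ} {p : ℤ → ℤ} (h : Val s t p) (ht : 1 ≤ t) {k : ℤ} (hk : 1 ≤ k) (hks : k ≤ s) :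
    p (1-k) < p (-k) ↔ k % 2 = 1 := by
  induction k, hk using Int.leInduction with
  | base => have := h.ctr; norm_num; omega
  | succ k hk ih =>
    have ih := ih (by omega)
    rw [show -(k+1) = -k-1 by ring, show 1-(k+1) = -k by ring]
    have a := h.dir' (-k) (-k-1) (1-k) (by omega) (by omega) (by omega) (by omega)
    have b := h.ne (-k) (1-k) (by omega) (by omega) (by omega)
    omega

theorem dirV {s t : ℤ} {p : ℤ → ℤ} (h : Val s t p) (hs : 1 ≤ s) {k : ℤ} (hk : 1 ≤ k) (hkt : k ≤ t) :
    p k < p (k-1) ↔ k % 2 = 1 := by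
  have := dirM h.mir hs hk hkt
  simp only [mir, neg_neg] at this
  rw [show -(1-k) = k-1 by ring] at this
  omega

theorem Val_of_OE {s t : ℤ} (hs : 1 ≤ s) (ht : 1 ≤ t) {p q : ℤ → ℤ} (h : OE (-s) t p q) (hp : Val s t p) :
    Val s t q := by
  refine ⟨?_, ?_, ?_, ?_⟩
  · intro x y h1 h2 h3 h4 e
    apply hp.inj x y h1 h2 h3 h4
    have := h x y h1 h2 h3 h4
    have := h y x h3 h4 h1 h2
    omega
  · rw [← h _ _ (by omega) (by omega) (by omega) (by omega), ← h _ _ (by omega) (by omega) (by omega) (by omega)]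
    exact hp.ctr
  · intro x h1 h2 h3
    rw [← h _ _ (by omega) (by omega) (by omega) (by omega), ← h _ _ (by omega) (by omega) (by omega) (by omega)]
    exact hp.dir x h1 h2 h3
  · intro x y h1 h2 h3 h4 h5 h6
    rw [← h.bt (by omega) (by omega) (by omega), ← h.bt (by omega) (by omega) (by omega)]
    exact hp.cr x y h1 h2 h3 h4 h5 h6

theorem exists_perm {n : ℕ} (f : Fin n → ℤ) (hf : Function.Injective f) :
    ∃ σ : Equiv.Perm (Fin n), ∀ i j, σ i < σ j ↔ f i < f j := by
  have hm : StrictMono (f ∘ Tuple.sort f) :=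
    (Tuple.monotone_sort f).strictMono_of_injective (hf.comp (Tuple.sort f).injective)
  refine ⟨(Tuple.sort f).symm, fun i j => ?_⟩
  rw [← hm.lt_iff_lt]
  simp

theorem perm_unique {n : ℕ} (σ τ : Equiv.Perm (Fin n)) (h : ∀ i j, σ i < σ j ↔ τ i < τ j) : σ = τ := by
  have hm : StrictMono (σ ∘ τ.symm) := by
    intro i j hij
    simp only [Function.comp]
    rw [h]; simpa using hij
  have := (StrictMono.range_inj hm strictMono_id).1 (by
    rw [Set.range_id]
    exact (τ.symm.trans σ).surjective.range_eq)
  ext i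
  have := congrFun this (τ i)
  simp at this
  rw [this]

noncomputable def Pos (a : ℕ) (ε : ℤ) {n : ℕ} (σ : Equiv.Perm (Fin n)) : ℤ → ℤ :=
  fun x => ε * (faceVal σ (x + a).toNat : ℤ)

theorem Pos_at {a n : ℕ} {ε : ℤ} {σ : Equiv.Perm (Fin n)} {x : ℤ} {i : ℕ} (h : x = (i:ℤ) - a) :
    Pos a ε σ x = ε * (faceVal σ i : ℤ) := by
  unfold Pos
  rw [show (x + a).toNat = i by omega]

theorem faceVal_inj {n : ℕ} {σ : Equiv.Perm (Fin n)} {i j : ℕ} (hi : i < n) (hj : j < n)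
    (h : faceVal σ i = faceVal σ j) : i = j := by
  unfold faceVal at h
  rw [dif_pos hi, dif_pos hj] at h
  have := σ.injective (Fin.ext h)
  simpa using this

theorem MVR_iff {a b : ℕ} {σ : Equiv.Perm (Fin (a+b+1))} :
    MVRelations (a+b+1) (fun i => if i < a then MV.M else MV.V) σ ↔
    ∀ i, i < a + b → (faceVal σ (i+1) < faceVal σ i ↔ ((i < a ∧ i % 2 = 0) ∨ (a ≤ i ∧ i % 2 = 1))) := by
  unfold MVRelations
  refine forall_congr' fun i => ?_
  rw [show i + 1 < a + b + 1 ↔ i < a + b by omega]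
  refine imp_congr_right fun hi => ?_
  have hne : faceVal σ (i+1) ≠ faceVal σ i := fun h => by
    have := faceVal_inj (by omega) (by omega) h
    omega
  have hiff : (((if i < a then MV.M else MV.V) = MV.M ∧ Even i) ∨ ((if i < a then MV.M else MV.V) = MV.V ∧ Odd i))
      ↔ ((i < a ∧ i % 2 = 0) ∨ (a ≤ i ∧ i % 2 = 1)) := by
    rw [Nat.even_iff, Nat.odd_iff]
    by_cases h : i < a
    · simp [h]
    · simp [h]; omega
  simp only [hiff]
  split_ifs with h
  · exact ⟨fun h' => iff_of_true h' h, fun h' => h'.2 h⟩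
  · exact ⟨fun h' => iff_of_false (by omega) h, fun h' => by
      have := fun h'' => h (h'.1 h''); omega⟩

theorem valid_iff {a b : ℕ} (ha : 1 ≤ a) (hb : 1 ≤ b) {ε : ℤ} (hε : (a % 2 = 1 ∧ ε = 1) ∨ (a % 2 = 0 ∧ ε = -1))
    {σ : Equiv.Perm (Fin (a+b+1))} :
    ValidLayerOrdering (a+b+1) (fun i => if i < a then MV.M else MV.V) σ ↔ Val a b (Pos a ε σ) := by
  unfold ValidLayerOrdering
  rw [MVR_iff]
  have hP : ∀ i : ℕ, Pos a ε σ ((i:ℤ) - a) = ε * (faceVal σ i : ℤ) := fun i => Pos_at rfl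
  constructor
  · rintro ⟨hm, hc⟩
    refine ⟨?_, ?_, ?_, ?_⟩
    · intro x y h1 h2 h3 h4 e
      obtain ⟨i, rfl⟩ : ∃ i : ℕ, x = (i:ℤ) - a := ⟨(x+a).toNat, by omega⟩
      obtain ⟨j, rfl⟩ : ∃ i : ℕ, y = (i:ℤ) - a := ⟨(y+a).toNat, by omega⟩
      rw [hP, hP] at e
      have : faceVal σ i = faceVal σ j := by
        rcases hε with ⟨_, rfl⟩ | ⟨_, rfl⟩ <;> omega
      have := faceVal_inj (by omega) (by omega) this
      omega
    · rw [Pos_at (i := a+1) (by push_cast; ring), Pos_at (i := a) (by omega), Pos_at (i := a-1) (by omega)]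
      have m1 := hm a (by omega)
      have m2 := hm (a-1) (by omega)
      rw [show a-1+1 = a by omega] at m2
      have n1 : faceVal σ (a+1) ≠ faceVal σ a := fun h => by
        have := faceVal_inj (by omega) (by omega) h
        omega
      have n2 : faceVal σ (a-1) ≠ faceVal σ a := fun h => by
        have := faceVal_inj (by omega) (by omega) h
        omega
      rcases hε with ⟨_, rfl⟩ | ⟨_, rfl⟩ <;> omega
    · intro x h1 h2 h3
      obtain ⟨i, rfl⟩ : ∃ i : ℕ, x = ((i+1:ℕ):ℤ) - a := ⟨(x+a-1).toNat, by omega⟩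
      rw [hP, Pos_at (i := i) (by push_cast; ring), Pos_at (i := i+1+1) (by push_cast; ring)]
      have m1 := hm i (by omega)
      have m2 := hm (i+1) (by omega)
      have n1 : faceVal σ (i+1) ≠ faceVal σ i := fun h => by
        have := faceVal_inj (by omega) (by omega) h
        omega
      have n2 : faceVal σ (i+1+1) ≠ faceVal σ (i+1) := fun h => by
        have := faceVal_inj (by omega) (by omega) h
        omega
      rcases hε with ⟨_, rfl⟩ | ⟨_, rfl⟩ <;> omega
    · intro x y h1 h2 h3 h4 h5 h6
      obtain ⟨i, rfl⟩ : ∃ i : ℕ, x = (i:ℤ) - a := ⟨(x+a).toNat, by omega⟩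
      obtain ⟨j, rfl⟩ : ∃ i : ℕ, y = (i:ℤ) - a := ⟨(y+a).toNat, by omega⟩
      rw [hP, hP, Pos_at (i := i+1) (by push_cast; ring), Pos_at (i := j+1) (by push_cast; ring)]
      have c := hc i j (by omega) (by omega) (by omega)
      simp only [Xor', Xor, StrictlyBetween] at c
      unfold Bt
      rcases hε with ⟨_, rfl⟩ | ⟨_, rfl⟩ <;> omega
  · intro hv
    constructor
    · intro i hi
      by_cases h : i < a
      · have := dirM hv (by omega) (k := (a:ℤ) - i) (by omega) (by omega)
        rw [Pos_at (i := i+1) (by push_cast; ring), Pos_at (i := i) (by ring)] at this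
        have n1 : faceVal σ (i+1) ≠ faceVal σ i := fun h => by
          have := faceVal_inj (by omega) (by omega) h
          omega
        rcases hε with ⟨_, rfl⟩ | ⟨_, rfl⟩ <;> omega
      · have := dirV hv (by omega) (k := (i:ℤ) + 1 - a) (by omega) (by omega)
        rw [Pos_at (i := i+1) (by push_cast; ring), Pos_at (i := i) (by ring)] at this
        have n1 : faceVal σ (i+1) ≠ faceVal σ i := fun h => by
          have := faceVal_inj (by omega) (by omega) h
          omega
        rcases hε with ⟨_, rfl⟩ | ⟨_, rfl⟩ <;> omega
    · intro i j hi hj hij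
      by_cases e : i = j
      · subst e
        simp only [Xor', Xor, StrictlyBetween]; omega
      · have c := hv.cr ((i:ℤ) - a) ((j:ℤ) - a) (by omega) (by omega) (by omega) (by omega) (by omega) (by omega)
        rw [hP, hP, Pos_at (i := i+1) (by push_cast; ring), Pos_at (i := j+1) (by push_cast; ring)] at c
        simp only [Xor', Xor, StrictlyBetween]
        unfold Bt at c
        rcases hε with ⟨_, rfl⟩ | ⟨_, rfl⟩ <;> omega

theorem faceVal_fin {n : ℕ} {σ : Equiv.Perm (Fin n)} (i : Fin n) : faceVal σ i = (σ i : ℕ) := by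
  unfold faceVal
  rw [dif_pos i.2]

theorem foldCount_eq {a b : ℕ} (ha : 1 ≤ a) (hb : 1 ≤ b) :
    foldCount (a+b+1) (fun i => if i < a then MV.M else MV.V) = Cnt a b (fun _ => True) := by
  obtain ⟨ε, hε⟩ : ∃ ε : ℤ, (a % 2 = 1 ∧ ε = 1) ∨ (a % 2 = 0 ∧ ε = -1) := by
    rcases Nat.mod_two_eq_zero_or_one a with h | h
    · exact ⟨-1, Or.inr ⟨h, rfl⟩⟩
    · exact ⟨1, Or.inl ⟨h, rfl⟩⟩
  have hε2 : ε = 1 ∨ ε = -1 := by omega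
  unfold foldCount
  have himg : relSet a b (fun _ => True) = (fun σ : Equiv.Perm (Fin (a+b+1)) => rel (-a) b (Pos a ε σ)) ''
      {σ | ValidLayerOrdering (a+b+1) (fun i => if i < a then MV.M else MV.V) σ} := by
    ext R
    constructor
    · rintro ⟨p, ⟨hp, -⟩, rfl⟩
      obtain ⟨σ, hσ⟩ := exists_perm (fun i : Fin (a+b+1) => ε * p ((i:ℤ) - a)) (by
        intro i j h
        have h : ε * p ((i:ℤ) - a) = ε * p ((j:ℤ) - a) := h
        have i2 := i.2
        have j2 := j.2
        have := hp.inj ((i:ℤ) - a) ((j:ℤ) - a) (by omega) (by omega) (by omega) (by omega)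
          (by rcases hε2 with rfl | rfl <;> omega)
        ext; omega)
      have hoe : OE (-(a:ℤ)) b p (Pos a ε σ) := by
        intro x y h1 h2 h3 h4
        have := hσ ⟨(x+a).toNat, by omega⟩ ⟨(y+a).toNat, by omega⟩
        rw [Fin.lt_def, ← faceVal_fin, ← faceVal_fin] at this
        simp only at this
        rw [show (((x+a).toNat : ℕ):ℤ) - a = x by omega, show (((y+a).toNat : ℕ):ℤ) - a = y by omega] at this
        have := hσ ⟨(y+a).toNat, by omega⟩ ⟨(x+a).toNat, by omega⟩
        rw [Fin.lt_def, ← faceVal_fin, ← faceVal_fin] at this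
        simp only at this
        rw [show (((x+a).toNat : ℕ):ℤ) - a = x by omega, show (((y+a).toNat : ℕ):ℤ) - a = y by omega] at this
        unfold Pos
        rcases hε2 with rfl | rfl <;> omega
      exact ⟨σ, (valid_iff ha hb hε).2 (Val_of_OE (by omega) (by omega) hoe hp), (rel_eq_iff.2 hoe).symm⟩
    · rintro ⟨σ, hσ, rfl⟩
      exact ⟨_, ⟨(valid_iff ha hb hε).1 hσ, trivial⟩, rfl⟩
  unfold Cnt
  rw [himg, Set.ncard_image_of_injective]
  · rfl
  · intro σ τ h
    have hoe := rel_eq_iff.1 h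
    apply perm_unique
    intro i j
    have i2 := i.2
    have j2 := j.2
    have h1 := hoe ((i:ℤ) - a) ((j:ℤ) - a) (by omega) (by omega) (by omega) (by omega)
    have h2 := hoe ((j:ℤ) - a) ((i:ℤ) - a) (by omega) (by omega) (by omega) (by omega)
    rw [Pos_at (i := i) rfl, Pos_at (i := j) rfl, Pos_at (i := i) rfl, Pos_at (i := j) rfl] at h1 h2
    rw [Fin.lt_def, Fin.lt_def, ← faceVal_fin, ← faceVal_fin, ← faceVal_fin, ← faceVal_fin]
    rcases hε2 with rfl | rfl <;> omega

/-- Theorem: for `a > b + 1` and `b ≥ 4`, the assignment `M^a V^b` on the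
`1 × (a+b+1)` strip folds in `ab + b² − b + 1` ways. -/
theorem stmt1 (a b : ℕ) (hab : b + 1 < a) (hb : 4 ≤ b) :
    foldCount (a + b + 1) (fun i => if i < a then MV.M else MV.V) =
      a * b + b ^ 2 - b + 1 := by
  rw [foldCount_eq (by omega) (by omega)]
  have h := F_val (s := a) (t := b) (by omega) (by omega)
  have hle : b ≤ b ^ 2 := by nlinarith
  zify [show b ≤ a * b + b ^ 2 by omega]
  exact h
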